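/- Let q be a prime power with q > 2 and let S be an algebraic hypersurface of PG(6,q^2) of degree q+1 defined over GF(q^2), not containing any solid, with exactly q^11 + q^9 + q^7 + q^4 + q^2 + 1 rational points, and let Sigma_3 be a solid with |S ∩ Sigma_3| = q^4 + q^2 + 1. Then every 5-dimensional projective subspace Sigma_5 of PG(6,q^2) containing Sigma_3 meets S in a Hermitian cone with vertex a point and base a non-singular Hermitian variety H(4,q^2); in particular |S ∩ Sigma_5| = q^9 + q^7 + q^4 + q^2 + 1. -/

import Mathlib

open MvPolynomial Module

/-- The set of points of the projective subspace of `PG(n-1, F)` determined by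
the linear subspace `W` of `F^n`. -/
def projPts {F : Type} [Field F] {n : ℕ} (W : Submodule F (Fin n → F)) :
    Set (Projectivization F (Fin n → F)) :=
  {P | P.submodule ≤ W}

/-- The set of `F`-rational points of the hypersurface of `PG(n-1, F)` defined by the
homogeneous polynomial `f`. -/
def hypersurfacePts {F : Type} [Field F] {n : ℕ} (f : MvPolynomial (Fin n) F) :
    Set (Projectivization F (Fin n → F)) :=
  {P | MvPolynomial.eval P.rep f = 0}


/-- `η` is a Hermitian (sesquilinear) form with respect to the involution `x ↦ x^q`:
additive in each argument, `F`-linear in the first, with `η w v = (η v w)^q`. -/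
def IsHermitianForm (q : ℕ) {F : Type} [Field F] {V : Type} [AddCommGroup V] [Module F V]
    (η : V → V → F) : Prop :=
  (∀ u v w, η (u + v) w = η u w + η v w) ∧
  (∀ u v w, η u (v + w) = η u v + η u w) ∧
  (∀ (a : F) (v w : V), η (a • v) w = a * η v w) ∧
  (∀ v w, η w v = (η v w) ^ q)

/-- The radical of the form `η` restricted to the subspace `W` has dimension `k`. -/
def HasRadicalDimOn {F : Type} [Field F] {n : ℕ}
    (η : (Fin n → F) → (Fin n → F) → F) (W : Submodule F (Fin n → F)) (k : ℕ) : Prop :=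
  ∃ R : Submodule F (Fin n → F), R ≤ W ∧ Module.finrank F R = k ∧
    ∀ v ∈ W, (v ∈ R ↔ ∀ w ∈ W, η v w = 0)

/-- `X` is the Hermitian variety of the projective subspace determined by `W` cut out by a
Hermitian form whose radical on `W` has dimension `k` (a non-singular Hermitian variety
if `k = 0`, a Hermitian cone with vertex of projective dimension `k - 1` otherwise). -/
def IsHermitianConeOn (q : ℕ) {F : Type} [Field F] {n : ℕ}
    (W : Submodule F (Fin n → F)) (k : ℕ)
    (X : Set (Projectivization F (Fin n → F))) : Prop :=
  ∃ η : (Fin n → F) → (Fin n → F) → F, IsHermitianForm q η ∧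
    HasRadicalDimOn η W k ∧
    X = {P | P.submodule ≤ W ∧ η P.rep P.rep = 0}

/-!
Regard the points of the projective space as vectors over the field `F` with `q ^ 2` elements.

If some line missed the hypersurface, every affine plane with that line at infinity would meet it in
a curve of degree `q + 1` with fewer than `q ^ 3` points: when the curve is irreducible, the
Stöhr–Voloch tangent polynomial meets it with multiplicity at least two at every rational point, and
Bézout's theorem applies; when it is reducible, an elementary count does. Averaging over these
planes contradicts the number of points, so the hypersurface meets every line. Inside the special
subspace this is the equality case of the Bose–Burton theorem, hence the section there is a
hyperplane, with underlying vector space `π`.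

A direction `d` of `π` is a zero of `f`, so `f` has degree at most `q` on every line `u + ⟨d⟩`, and
the number of points forces equality on average: such a line has exactly `q` zeros unless its
leading coefficient `tangentForm f d u` vanishes, and in a plane `u + ⟨d, d'⟩` the zeros form `q`
parallel lines. Comparing the slopes of these lines gives
`tangentForm f u d = e * tangentForm f d u ^ q` with a constant `e` of norm `e ^ (q + 1) = 1`.
By Hilbert 90 some multiple `l * f` takes its values in the fixed field of `x ↦ x ^ q`, and then
`l * tangentForm f` is a Hermitian form with diagonal `l * f`, whose radical is found by a dimension
count.
-/

open scoped Polynomial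

section Pencil

variable {F R σ : Type*} [Field F] [CommRing R] [Algebra F R]

theorem aeval_smul_of_isHomogeneous {f : MvPolynomial σ F} {N : ℕ} (hf : f.IsHomogeneous N)
    (c : R) (v : σ → R) : aeval (c • v) f = c ^ N * aeval v f := by
  simp only [aeval_def, eval₂_eq, Finset.mul_sum]
  refine Finset.sum_congr rfl fun m hm => ?_
  have hdeg : ∑ i ∈ m.support, m i = N := by
    rw [← hf (mem_support_iff.mp hm), Finsupp.weight_apply, Finsupp.sum]
    simp
  simp only [Pi.smul_apply, smul_eq_mul, mul_pow, Finset.prod_mul_distrib,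
    Finset.prod_pow_eq_pow_sum, hdeg]
  ring

theorem eval_smul_of_isHomogeneous {f : MvPolynomial σ F} {N : ℕ} (hf : f.IsHomogeneous N)
    (c : F) (v : σ → F) : eval (c • v) f = c ^ N * eval v f := by
  simpa using aeval_smul_of_isHomogeneous hf c v

theorem derivation_aeval_eq_sum [Fintype σ] (D : Derivation F R R) (v : σ → R)
    (f : MvPolynomial σ F) : D (aeval v f) = ∑ i, aeval v (pderiv i f) * D (v i) := by
  classical
  induction f using MvPolynomial.induction_on with
  | C a => simp
  | add p q hp hq => simp [hp, hq, add_mul, Finset.sum_add_distrib]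
  | mul_X p i hp =>
    simp only [map_mul, aeval_X, Derivation.leibniz, hp, smul_eq_mul, pderiv_X, map_add, add_mul,
      Finset.sum_add_distrib, Pi.single_apply, Finset.mul_sum]
    congr 1
    · simp [apply_ite, ite_mul]
    · exact Finset.sum_congr rfl fun j _ => by ring

/-- The restriction of `f` to the line `u + X w`, as a polynomial in the parameter `X`. The base
points may have coordinates in an extension `R` of the ground field, in particular in `F[X]`. -/
noncomputable def pencil (f : MvPolynomial σ F) (u w : σ → R) : R[X] :=
  aeval (fun i => Polynomial.C (u i) + Polynomial.C (w i) * Polynomial.X) f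

theorem map_pencil {A : Type*} [CommRing A] [Algebra F A] (φ : R →ₐ[F] A) (f : MvPolynomial σ F)
    (u w : σ → R) : (pencil f u w).map (φ : R →+* A) = pencil f (φ ∘ u) (φ ∘ w) := by
  have h := comp_aeval_apply (fun i => Polynomial.C (u i) + Polynomial.C (w i) * Polynomial.X)
    (Polynomial.mapAlgHom φ) f
  simpa [pencil] using h

theorem eval_pencil (f : MvPolynomial σ F) (u w : σ → R) (t : R) :
    (pencil f u w).eval t = aeval (u + t • w) f := by
  have h := comp_aeval_apply (fun i => Polynomial.C (u i) + Polynomial.C (w i) * Polynomial.X)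
    ((Polynomial.aeval (R := R) t).restrictScalars F) f
  rw [AlgHom.restrictScalars_apply, Polynomial.coe_aeval_eq_eval] at h
  rw [pencil, h]
  congr 2
  ext1 i
  simp only [AlgHom.restrictScalars_apply, Polynomial.coe_aeval_eq_eval, Polynomial.eval_add,
    Polynomial.eval_C_mul, Polynomial.eval_C, Polynomial.eval_X, Pi.add_apply, Pi.smul_apply,
    smul_eq_mul, mul_comm (w i)]

theorem eval_pencil_self (f : MvPolynomial σ F) (u w : σ → F) (t : F) :
    (pencil f u w).eval t = eval (u + t • w) f := by
  rw [eval_pencil, aeval_eq_eval]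

theorem coeff_zero_pencil (f : MvPolynomial σ F) (u w : σ → R) :
    (pencil f u w).coeff 0 = aeval u f := by
  simp [Polynomial.coeff_zero_eq_eval_zero, eval_pencil]

theorem derivative_pencil [Fintype σ] (f : MvPolynomial σ F) (u w : σ → R) :
    Polynomial.derivative (pencil f u w) =
      ∑ i, pencil (pderiv i f) u w * Polynomial.C (w i) := by
  have h := derivation_aeval_eq_sum ((Polynomial.derivative' (R := R)).restrictScalars F)
    (fun i => Polynomial.C (u i) + Polynomial.C (w i) * Polynomial.X) f
  simpa [pencil] using h

/-- The substitution `X ↦ X⁻¹` exchanges the two ends of the line. -/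
theorem toLaurent_pencil {f : MvPolynomial σ F} {N : ℕ} (hf : f.IsHomogeneous N)
    (u w : σ → R) : Polynomial.toLaurent (pencil f u w) =
      LaurentPolynomial.T N * LaurentPolynomial.invert (Polynomial.toLaurent (pencil f w u)) := by
  have hl := comp_aeval_apply (fun i => Polynomial.C (u i) + Polynomial.C (w i) * Polynomial.X)
    ((Polynomial.toLaurentAlg (R := R)).restrictScalars F) f
  have hr := comp_aeval_apply (fun i => Polynomial.C (w i) + Polynomial.C (u i) * Polynomial.X)
    (((LaurentPolynomial.invert (R := R)).toAlgHom.comp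
      Polynomial.toLaurentAlg).restrictScalars F) f
  simp only [AlgHom.restrictScalars_apply, AlgHom.comp_apply, Polynomial.toLaurentAlg_apply,
    AlgEquiv.toAlgHom_apply, map_add, map_mul, Polynomial.toLaurent_C, Polynomial.toLaurent_X,
    LaurentPolynomial.invert_C, LaurentPolynomial.invert_T] at hl hr
  have hT : (LaurentPolynomial.T N : LaurentPolynomial R) = LaurentPolynomial.T 1 ^ N := by
    simp [LaurentPolynomial.T_pow]
  rw [pencil, pencil, hl, hr, hT, ← aeval_smul_of_isHomogeneous hf]
  congr 2
  ext1 i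
  rw [Pi.smul_apply, smul_eq_mul, mul_add, mul_left_comm, ← LaurentPolynomial.T_add]
  rw [add_neg_cancel, LaurentPolynomial.T_zero, mul_one, mul_comm, add_comm]

theorem coeff_toLaurent_natCast (p : R[X]) (k : ℕ) : p.toLaurent.coeff (k : ℤ) = p.coeff k := by
  rw [LaurentPolynomial.coeff_toLaurent]
  exact Finsupp.mapDomain_apply Nat.castEmbedding.injective _ k

theorem coeff_T_mul_invert (p : LaurentPolynomial R) (N k : ℤ) :
    (LaurentPolynomial.T N * LaurentPolynomial.invert p).coeff k = p.coeff (N - k) := by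
  rw [LaurentPolynomial.T, AddMonoidAlgebra.coeff_single_mul_apply]
  simp [neg_add_eq_sub]

theorem coeff_pencil_comm {f : MvPolynomial σ F} {N : ℕ} (hf : f.IsHomogeneous N)
    (u w : σ → R) {i j : ℕ} (hij : i + j = N) :
    (pencil f u w).coeff i = (pencil f w u).coeff j := by
  have h := congrArg (fun p => p.coeff (i : ℤ)) (toLaurent_pencil hf u w)
  rwa [coeff_T_mul_invert, coeff_toLaurent_natCast, show (N : ℤ) - i = j by omega,
    coeff_toLaurent_natCast] at h

theorem natDegree_pencil_le_totalDegree (f : MvPolynomial σ F) (u w : σ → R) :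
    (pencil f u w).natDegree ≤ f.totalDegree := by
  rw [pencil, aeval_def, eval₂_eq]
  refine Polynomial.natDegree_sum_le_of_forall_le _ _ fun m hm => ?_
  refine (Polynomial.natDegree_C_mul_le _ _).trans ?_
  refine (Polynomial.natDegree_prod_le _ _).trans (le_trans ?_ (le_totalDegree hm))
  refine Finset.sum_le_sum fun i _ => Polynomial.natDegree_pow_le_of_le _ ?_ |>.trans_eq (mul_one _)
  compute_degree

theorem natDegree_pencil_le {f : MvPolynomial σ F} {N : ℕ} (hf : f.IsHomogeneous N)
    (u w : σ → R) : (pencil f u w).natDegree ≤ N :=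
  (natDegree_pencil_le_totalDegree f u w).trans hf.totalDegree_le

theorem coeff_pencil_dvd_coeff_pencil [IsDomain R] {g h : MvPolynomial σ F} (hgh : g ∣ h)
    {N M : ℕ} (hg : g.totalDegree ≤ N) (hh : h.totalDegree ≤ N + M) {u w : σ → R}
    (hN : (pencil g u w).coeff N ≠ 0) :
    (pencil g u w).coeff N ∣ (pencil h u w).coeff (N + M) := by
  obtain ⟨k, rfl⟩ := hgh
  have hmul : pencil (g * k) u w = pencil g u w * pencil k u w := map_mul _ _ _
  have hg' := (natDegree_pencil_le_totalDegree g u w).trans hg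
  have hgN := Polynomial.natDegree_eq_of_le_of_coeff_ne_zero hg' hN
  have hk : (pencil k u w).natDegree ≤ M := by
    rcases eq_or_ne (pencil k u w) 0 with hk | hk
    · simp [hk]
    · have hgk := (natDegree_pencil_le_totalDegree (g * k) u w).trans hh
      rw [hmul, Polynomial.natDegree_mul (fun h0 => hN (by simp [h0])) hk, hgN] at hgk
      omega
  rw [hmul, Polynomial.coeff_mul_add_eq_of_natDegree_le hg' hk]
  exact dvd_mul_right _ _

theorem coeff_pencil_of_isHomogeneous {f : MvPolynomial σ F} {N : ℕ} (hf : f.IsHomogeneous N)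
    (u w : σ → R) : (pencil f u w).coeff N = aeval w f := by
  rw [coeff_pencil_comm hf u w (add_zero N), coeff_zero_pencil]

/-- Reversing the line puts the moving base point in the direction, where each factor `X` comes
with at most one factor of the parameter. -/
theorem natDegree_coeff_pencil_le {f : MvPolynomial σ F} {N : ℕ} (hf : f.IsHomogeneous N)
    (u v w : σ → F) (k : ℕ) :
    ((pencil f (fun i => Polynomial.C (u i) + Polynomial.C (v i) * Polynomial.X)
      (fun i => Polynomial.C (w i))).coeff k).natDegree ≤ N - k := by
  rcases lt_or_ge N k with hk | hk
  · rw [Polynomial.coeff_eq_zero_of_natDegree_lt ((natDegree_pencil_le hf _ _).trans_lt hk)]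
    simp
  rw [coeff_pencil_comm hf _ _ (Nat.add_sub_of_le hk)]
  let A : Subalgebra F F[X][X] :=
    { carrier := {P | ∀ j, (P.coeff j).natDegree ≤ j}
      mul_mem' := fun {P Q} hP hQ j => by
        rw [Polynomial.coeff_mul]
        refine Polynomial.natDegree_sum_le_of_forall_le _ _ fun x hx => ?_
        rw [← Finset.HasAntidiagonal.mem_antidiagonal.mp hx]
        exact Polynomial.natDegree_mul_le_of_le (hP x.1) (hQ x.2)
      add_mem' := fun {P Q} hP hQ j => by
        rw [Polynomial.coeff_add]
        exact Polynomial.natDegree_add_le_of_degree_le (hP j) (hQ j)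
      algebraMap_mem' := fun a j => by
        simp [Polynomial.algebraMap_apply, Polynomial.coeff_C, apply_ite] }
  have hmem : ∀ i, Polynomial.C (Polynomial.C (w i)) +
      Polynomial.C (Polynomial.C (u i) + Polynomial.C (v i) * Polynomial.X) * Polynomial.X ∈ A := by
    rintro i (_ | _ | j)
    · simp
    · simp only [zero_add, Polynomial.coeff_add, Polynomial.coeff_C_succ, Polynomial.coeff_mul_X,
        Polynomial.coeff_C_zero]
      compute_degree
    · simp
  have hle := Algebra.adjoin_le (S := A) (Set.range_subset_iff.mpr hmem)
  rw [Algebra.adjoin_range_eq_range_aeval] at hle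
  exact hle (AlgHom.mem_range_self _ f) (N - k)

theorem eval_coeff_pencil (f : MvPolynomial σ F) (u v w : σ → F) (k : ℕ) (s : F) :
    ((pencil f (fun i => Polynomial.C (u i) + Polynomial.C (v i) * Polynomial.X)
      (fun i => Polynomial.C (w i))).coeff k).eval s = (pencil f (u + s • v) w).coeff k := by
  have hu : Polynomial.aeval s ∘ (fun i => Polynomial.C (u i) + Polynomial.C (v i) * Polynomial.X) =
      u + s • v := funext fun i => by simp [mul_comm (v i)]
  have hw : Polynomial.aeval s ∘ (fun i => Polynomial.C (w i)) = w := funext fun i => by simp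
  rw [← hw, ← hu, ← map_pencil, Polynomial.coeff_map, hw, RingHom.coe_coe,
    Polynomial.coe_aeval_eq_eval]

variable [Fintype σ]

/-- The differential of `f` at `v`; its zero set is the tangent hyperplane when `f v = 0`. -/
noncomputable def tangentForm (f : MvPolynomial σ F) (v : σ → F) : (σ → F) →ₗ[F] F :=
  Fintype.linearCombination F fun i => eval v (pderiv i f)

theorem tangentForm_apply (f : MvPolynomial σ F) (v u : σ → F) :
    tangentForm f v u = ∑ i, u i * eval v (pderiv i f) := by
  simp [tangentForm, Fintype.linearCombination_apply]

theorem tangentForm_self {f : MvPolynomial σ F} {N : ℕ} (hf : f.IsHomogeneous N) (v : σ → F) :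
    tangentForm f v v = N * eval v f := by
  simpa [tangentForm_apply] using congrArg (eval v) hf.sum_X_mul_pderiv

theorem coeff_one_pencil (f : MvPolynomial σ F) (u d : σ → F) :
    (pencil f u d).coeff 1 = tangentForm f u d := by
  have h := congrArg (Polynomial.coeff · 0) (derivative_pencil f u d)
  simpa [Polynomial.coeff_derivative, coeff_zero_pencil, tangentForm_apply, mul_comm] using h

end Pencil

section FiniteField

variable {F : Type*} [Field F] [Fintype F] {q : ℕ}

theorem natCast_eq_zero_of_card_eq_sq (hcard : Fintype.card F = q ^ 2) : (q : F) = 0 := by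
  have h := FiniteField.cast_card_eq_zero F
  rw [hcard, Nat.cast_pow] at h
  exact pow_eq_zero_iff two_ne_zero |>.mp h

theorem add_pow_of_card_eq_sq (hcard : Fintype.card F = q ^ 2) (a b : F) :
    (a + b) ^ q = a ^ q + b ^ q := by
  obtain ⟨p, hp⟩ := CharP.exists F
  obtain ⟨n, hprime, hn⟩ := FiniteField.card F p
  have := Fact.mk hprime
  obtain ⟨k, -, rfl⟩ := (Nat.dvd_prime_pow hprime).mp
    (hn ▸ hcard ▸ dvd_pow_self q two_ne_zero)
  exact add_pow_char_pow a b p k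

/-- The involution `a ↦ a ^ q` of the field of order `q ^ 2`. -/
def conj (hcard : Fintype.card F = q ^ 2) : F →+* F where
  __ := powMonoidHom q
  map_zero' := zero_pow fun hq => Fintype.card_ne_zero (α := F) (by simp [hq] at hcard)
  map_add' := add_pow_of_card_eq_sq hcard

theorem conj_apply (hcard : Fintype.card F = q ^ 2) (a : F) : conj hcard a = a ^ q := rfl

theorem pow_pow_of_card_eq_sq (hcard : Fintype.card F = q ^ 2) (a : F) : (a ^ q) ^ q = a := by
  rw [← pow_mul, ← sq, ← hcard, FiniteField.pow_card]

theorem eq_zero_of_natDegree_lt_card {p : F[X]} (hdeg : p.natDegree < Fintype.card F)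
    (h : ∀ x, p.eval x = 0) : p = 0 :=
  p.eq_zero_of_natDegree_lt_card_of_eval_eq_zero Function.injective_id h hdeg

theorem exists_add_mul_pow_ne_zero (hq : 1 < q) (hcard : Fintype.card F = q ^ 2) (c : F) :
    ∃ y : F, y + c * y ^ q ≠ 0 := by
  by_contra! h
  have hdeg : (Polynomial.X + Polynomial.C c * Polynomial.X ^ q : F[X]).natDegree ≤ q := by
    compute_degree
    simpa using hq.le
  have hzero := eq_zero_of_natDegree_lt_card (hdeg.trans_lt (hcard ▸ by nlinarith))
    (fun y => by simpa using h y)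
  have hcoeff := congrArg (Polynomial.coeff · 1) hzero
  simp [Polynomial.coeff_X_pow, hq.ne] at hcoeff

theorem pow_add_one_eq_one_of_mul_pow_eq_neg (hcard : Fintype.card F = q ^ 2) {e x : F}
    (hx : x ≠ 0) (h : e * x ^ q = -x) : e ^ (q + 1) = 1 := by
  have hconj : e ^ q * x = -x ^ q := by
    simpa only [map_mul, map_neg, conj_apply, pow_pow_of_card_eq_sq hcard]
      using congrArg (conj hcard) h
  refine mul_right_cancel₀ hx ?_
  linear_combination e * hconj - h

/-- Hilbert's Theorem 90 for the quadratic extension fixed by `a ↦ a ^ q`. -/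
theorem exists_pow_eq_mul_of_norm_eq_one (hq : 1 < q) (hcard : Fintype.card F = q ^ 2) {e : F}
    (he : e ^ (q + 1) = 1) : ∃ l : F, l ≠ 0 ∧ l ^ q = l * e := by
  obtain ⟨y, hy⟩ := exists_add_mul_pow_ne_zero hq hcard (e ^ q)
  refine ⟨_, hy, ?_⟩
  rw [add_pow_of_card_eq_sq hcard, mul_pow, pow_pow_of_card_eq_sq hcard,
    pow_pow_of_card_eq_sq hcard]
  linear_combination (-y ^ q) * he

theorem exists_add_pow_eq_of_pow_eq_self (hq : 1 < q) (hcard : Fintype.card F = q ^ 2) {a : F}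
    (ha : a ^ q = a) : ∃ z : F, z + z ^ q = a := by
  obtain ⟨y, hy⟩ := exists_add_mul_pow_ne_zero hq hcard 1
  rw [one_mul] at hy
  have htrace : (y + y ^ q) ^ q = y + y ^ q := by
    rw [add_pow_of_card_eq_sq hcard, pow_pow_of_card_eq_sq hcard, add_comm]
  refine ⟨y * (a / (y + y ^ q)), ?_⟩
  rw [mul_pow, div_pow, ha, htrace]
  field_simp

theorem coeff_eq_neg_sum_units [DecidableEq F] {p : F[X]}
    (hdeg : p.natDegree < Fintype.card F - 1) {j : ℕ} (hj : j < Fintype.card F - 1) :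
    p.coeff j = -∑ x : Fˣ, (x⁻¹ : F) ^ j * p.eval (x : F) := by
  have hsum : ∀ i < Fintype.card F - 1,
      ∑ x : Fˣ, (x⁻¹ : F) ^ j * (x : F) ^ i = if i = j then -1 else 0 := by
    intro i hi
    have hpow : ∀ x : Fˣ, (x⁻¹ : F) ^ j * (x : F) ^ i = (x : F) ^ (Fintype.card F - 1 - j + i) := by
      intro x
      have hx : (x : F) ^ (Fintype.card F - 1) = 1 :=
        FiniteField.pow_card_sub_one_eq_one _ x.ne_zero
      rw [pow_add, inv_pow, pow_sub₀ _ x.ne_zero hj.le, hx, one_mul]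
    simp only [hpow, FiniteField.sum_pow_units]
    refine if_congr ⟨fun hdvd => ?_, fun hij => ?_⟩ rfl rfl
    · obtain ⟨c, hc⟩ := hdvd
      have hc1 : c = 1 := by
        have := Nat.lt_of_mul_lt_mul_left (show (Fintype.card F - 1) * c < _ * 2 by omega)
        rcases c with _ | _ | c <;> omega
      subst hc1
      omega
    · subst hij
      rw [Nat.sub_add_cancel hj.le]
  have heval : ∀ x : F, p.eval x = ∑ i ∈ Finset.range (Fintype.card F - 1), p.coeff i * x ^ i :=
    fun x => Polynomial.eval_eq_sum_range' hdeg x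
  simp only [heval, Finset.mul_sum, mul_left_comm _ (p.coeff _)]
  rw [Finset.sum_comm]
  simp only [← Finset.mul_sum]
  rw [Finset.sum_congr rfl fun i hi => by rw [hsum i (Finset.mem_range.mp hi)]]
  simp [hj]

theorem coeff_pow_of_eval_pow (hcard : Fintype.card F = q ^ 2) {p : F[X]}
    (hdeg : p.natDegree < q ^ 2 - 1) (hp : ∀ x : F, x ≠ 0 → p.eval x ^ q = p.eval x) {i : ℕ}
    (hi : i * q < q ^ 2 - 1) : p.coeff i ^ q = p.coeff (i * q) := by
  classical
  have hiq : i < q ^ 2 - 1 := by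
    rcases q.eq_zero_or_pos with rfl | hq
    · simp at hi
    · nlinarith
  rw [← hcard] at hdeg hi hiq
  rw [coeff_eq_neg_sum_units hdeg hi, coeff_eq_neg_sum_units hdeg hiq, ← conj_apply hcard]
  simp only [map_neg, map_sum, map_mul, conj_apply, ← pow_mul]
  congr 1
  exact Finset.sum_congr rfl fun x _ => by rw [hp x x.ne_zero]

end FiniteField

section Bezout

variable {F : Type*} [Field F]

theorem two_mul_finrank_restrictTotalDegree (m : ℕ) :
    2 * finrank F (restrictTotalDegree (Fin 2) F m) = (m + 1) * (m + 2) := by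
  let monomials : {s : Fin 2 →₀ ℕ | (s.sum fun _ e => e) ≤ m} ≃
      (Finset.range (m + 1)).sigma fun k => Finset.HasAntidiagonal.antidiagonal k :=
    { toFun := fun s => ⟨⟨s.1 0 + s.1 1, s.1 0, s.1 1⟩, by
        have hs := s.2
        rw [Set.mem_ofPred_eq, Finsupp.sum_fintype _ _ (fun _ => rfl), Fin.sum_univ_two] at hs
        simpa using Nat.lt_succ_of_le hs⟩
      invFun := fun x => ⟨Finsupp.equivFunOnFinite.symm ![x.1.2.1, x.1.2.2], by
        have hx := x.2
        simp only [Finset.mem_sigma, Finset.mem_range, Finset.HasAntidiagonal.mem_antidiagonal]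
          at hx
        rw [Set.mem_ofPred_eq, Finsupp.sum_fintype _ _ (fun _ => rfl), Fin.sum_univ_two]
        simp
        omega⟩
      left_inv := fun s => by
        ext i
        fin_cases i <;> simp
      right_inv := by
        rintro ⟨⟨k, i, j⟩, h⟩
        simp only [Finset.mem_sigma, Finset.HasAntidiagonal.mem_antidiagonal] at h
        obtain ⟨-, rfl⟩ := h
        simp }
  have hcard := finrank_eq_nat_card_basis
    (basisRestrictSupport F {s : Fin 2 →₀ ℕ | (s.sum fun _ e => e) ≤ m})
  rw [Nat.card_congr monomials, Nat.card_eq_fintype_card, Fintype.card_coe, Finset.card_sigma]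
    at hcard
  simp only [Finset.Nat.card_antidiagonal] at hcard
  have hgauss := Finset.sum_range_id_mul_two (m + 2)
  rw [Finset.sum_range_succ'] at hgauss
  rw [restrictTotalDegree, hcard]
  simp only [add_zero, show m + 2 - 1 = m + 1 from rfl] at hgauss
  rw [mul_comm 2, hgauss, mul_comm]

variable {σ : Type*}

theorem map_mulLeft_restrictTotalDegree_le (g : MvPolynomial σ F) (m : ℕ) :
    (restrictTotalDegree σ F m).map (LinearMap.mulLeft F g) ≤
      restrictTotalDegree σ F (g.totalDegree + m) := by
  rintro _ ⟨p, hp, rfl⟩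
  rw [SetLike.mem_coe, mem_restrictTotalDegree] at hp
  rw [mem_restrictTotalDegree, LinearMap.mulLeft_apply]
  exact (totalDegree_mul g p).trans (by gcongr)

theorem finrank_map_mulLeft {g : MvPolynomial σ F} (hg : g ≠ 0)
    (P : Submodule F (MvPolynomial σ F)) :
    finrank F (P.map (LinearMap.mulLeft F g)) = finrank F P :=
  (Submodule.equivMapOfInjective _ ((mul_right_injective₀ hg)) P).finrank_eq.symm

theorem map_mulLeft_inf_map_mulLeft_le {g h : MvPolynomial σ F} (hg : Prime g) (hgh : ¬ g ∣ h)
    (c m : ℕ) :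
    (restrictTotalDegree σ F m).map (LinearMap.mulLeft F g) ⊓
        (restrictTotalDegree σ F (c + g.totalDegree)).map (LinearMap.mulLeft F h) ≤
      (restrictTotalDegree σ F c).map (LinearMap.mulLeft F (g * h)) := by
  rintro _ ⟨⟨a, -, rfl⟩, b, hb, hab⟩
  rw [LinearMap.mulLeft_apply, LinearMap.mulLeft_apply] at hab
  obtain ⟨k, rfl⟩ := (hg.dvd_or_dvd (hab ▸ dvd_mul_right g a)).resolve_left hgh
  rw [SetLike.mem_coe, mem_restrictTotalDegree] at hb
  refine ⟨k, ?_, ?_⟩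
  · rw [SetLike.mem_coe, mem_restrictTotalDegree]
    rcases eq_or_ne k 0 with rfl | hk
    · simp
    · rw [totalDegree_mul_of_isDomain hg.ne_zero hk] at hb
      omega
  · rw [LinearMap.mulLeft_apply, LinearMap.mulLeft_apply, ← hab]
    ring

variable {M : Type*} [AddCommGroup M] [Module F M] [FiniteDimensional F M]

theorem exists_map_restrictTotalDegree_eq_top {Φ : MvPolynomial σ F →ₗ[F] M}
    (hΦ : Function.Surjective Φ) : ∃ c, ∀ m, c ≤ m → (restrictTotalDegree σ F m).map Φ = ⊤ := by
  choose p hp using fun i => hΦ (finBasis F M i)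
  refine ⟨Finset.univ.sup fun i => (p i).totalDegree, fun m hm => ?_⟩
  rw [eq_top_iff, ← (finBasis F M).span_eq, Submodule.span_le, Set.range_subset_iff]
  refine fun i => ⟨p i, ?_, hp i⟩
  rw [SetLike.mem_coe, mem_restrictTotalDegree]
  exact (Finset.le_sup (f := fun i => (p i).totalDegree) (Finset.mem_univ i)).trans hm

/-- Bézout's theorem for affine plane curves: `M` plays the role of the coordinate ring of their
intersection. -/
theorem finrank_le_totalDegree_mul_totalDegree {g h : MvPolynomial (Fin 2) F} (hg : Prime g)
    (hgh : ¬ g ∣ h) {Φ : MvPolynomial (Fin 2) F →ₗ[F] M} (hΦ : Function.Surjective Φ)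
    (hΦg : ∀ a, Φ (g * a) = 0) (hΦh : ∀ a, Φ (h * a) = 0) :
    finrank F M ≤ g.totalDegree * h.totalDegree := by
  obtain ⟨c, hc⟩ := exists_map_restrictTotalDegree_eq_top hΦ
  set d := g.totalDegree with hd
  set e := h.totalDegree with he
  have hh0 : h ≠ 0 := by
    rintro rfl
    exact hgh (dvd_zero g)
  set P := fun m => restrictTotalDegree (Fin 2) F m
  set A := (P (c + e)).map (LinearMap.mulLeft F g) with hA
  set B := (P (c + d)).map (LinearMap.mulLeft F h) with hB
  have hA_le : A ≤ P (c + d + e) := (map_mulLeft_restrictTotalDegree_le g _).trans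
    (le_of_eq (by rw [← hd, show d + (c + e) = c + d + e by ring]))
  have hB_le : B ≤ P (c + d + e) := (map_mulLeft_restrictTotalDegree_le h _).trans
    (le_of_eq (by rw [← he, show e + (c + d) = c + d + e by ring]))
  have hA_ker : A ≤ LinearMap.ker Φ := Submodule.map_le_iff_le_comap.mpr fun a _ => hΦg a
  have hB_ker : B ≤ LinearMap.ker Φ := Submodule.map_le_iff_le_comap.mpr fun b _ => hΦh b
  have hinf : finrank F (A ⊓ B : Submodule F _) ≤ finrank F (P c) :=
    (Submodule.finrank_mono (map_mulLeft_inf_map_mulLeft_le hg hgh c (c + e))).trans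
      (Submodule.finrank_map_le _ _)
  have hsup : finrank F (A ⊔ B : Submodule F _) + finrank F M ≤ finrank F (P (c + d + e)) := by
    have hrank := (Φ.domRestrict (P (c + d + e))).finrank_range_add_finrank_ker
    rw [LinearMap.range_domRestrict, hc _ (by omega), finrank_top, LinearMap.ker_domRestrict,
      add_comm] at hrank
    rw [← hrank, ← (Submodule.comapSubtypeEquivOfLe (sup_le hA_le hB_le)).finrank_eq]
    gcongr
    exact Submodule.finrank_mono (Submodule.comap_mono (sup_le hA_ker hB_ker))
  have hsum := Submodule.finrank_sup_add_finrank_inf_eq A B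
  rw [hA, hB, finrank_map_mulLeft hg.ne_zero, finrank_map_mulLeft hh0, ← hA, ← hB] at hsum
  have hdim (m : ℕ) : 2 * finrank F (P m) = _ := two_mul_finrank_restrictTotalDegree m
  nlinarith [hdim c, hdim (c + d), hdim (c + e), hdim (c + d + e)]

end Bezout

section AffineSection

variable {F σ τ : Type*} [Field F] [Fintype τ]

/-- The restriction of `f` to the affine space through `v` spanned by the directions `e i`, as a
polynomial in the affine coordinates. -/
noncomputable def affineSection (f : MvPolynomial σ F) (v : σ → F) (e : τ → σ → F) :
    MvPolynomial τ F :=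
  aeval (fun j => C (v j) + ∑ i, C (e i j) * X i) f

theorem eval_affineSection (f : MvPolynomial σ F) (v : σ → F) (e : τ → σ → F) (s : τ → F) :
    eval s (affineSection f v e) = eval (v + ∑ i, s i • e i) f := by
  have h := comp_aeval_apply (fun j => C (v j) + ∑ i, C (e i j) * X i) (aeval s) f
  rw [← aeval_eq_eval, ← aeval_eq_eval, affineSection, h]
  congr 2
  ext1 j
  simp [mul_comm (s _)]

theorem pencil_affineSection {R : Type*} [CommRing R] [Algebra F R] (f : MvPolynomial σ F)
    (v : σ → F) (e : τ → σ → F) (P d : τ → R) :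
    pencil (affineSection f v e) P d =
      pencil f (fun j => algebraMap F R (v j) + ∑ i, algebraMap F R (e i j) * P i)
        (fun j => ∑ i, algebraMap F R (e i j) * d i) := by
  rw [pencil, affineSection, comp_aeval_apply, pencil]
  congr 2
  ext1 j
  simp only [map_add, map_sum, map_mul, algHom_C, Polynomial.algebraMap_apply, aeval_X, mul_add,
    Finset.sum_add_distrib, Finset.sum_mul, mul_assoc, add_assoc]

theorem coeff_pencil_affineSection {R : Type*} [CommRing R] [Algebra F R] {f : MvPolynomial σ F}
    {N : ℕ} (hf : f.IsHomogeneous N) (v : σ → F) (e : τ → σ → F) (P d : τ → R) :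
    (pencil (affineSection f v e) P d).coeff N =
      aeval (fun j => ∑ i, algebraMap F R (e i j) * d i) f := by
  rw [pencil_affineSection, coeff_pencil_of_isHomogeneous hf]

theorem totalDegree_affineSection_le {f : MvPolynomial σ F} {N : ℕ} (hf : f.IsHomogeneous N)
    (v : σ → F) (e : τ → σ → F) : (affineSection f v e).totalDegree ≤ N := by
  have hlin : ∀ j, (C (v j) + ∑ i, C (e i j) * X i : MvPolynomial τ F).totalDegree ≤ 1 := by
    refine fun j => (totalDegree_add _ _).trans (max_le (by simp) ?_)
    exact totalDegree_finsetSum_le fun i _ => (totalDegree_mul _ _).trans (by simp)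
  rw [affineSection, aeval_def, eval₂_eq]
  refine totalDegree_finsetSum_le fun m hm => (totalDegree_mul _ _).trans ?_
  rw [algebraMap_eq, totalDegree_C, zero_add]
  refine (totalDegree_finsetProd _ _).trans (le_trans ?_ hf.totalDegree_le)
  refine le_trans (Finset.sum_le_sum fun j _ => ?_) (le_totalDegree hm)
  exact (totalDegree_pow _ _).trans ((Nat.mul_le_mul_left _ (hlin j)).trans_eq (mul_one _))

theorem pderiv_affineSection [Fintype σ] (f : MvPolynomial σ F) (v : σ → F) (e : τ → σ → F)
    (i : τ) : pderiv i (affineSection f v e) = ∑ j, affineSection (pderiv j f) v e * C (e i j) := by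
  classical
  rw [affineSection, derivation_aeval_eq_sum]
  refine Finset.sum_congr rfl fun j _ => ?_
  simp [affineSection, Derivation.leibniz, pderiv_X, Pi.single_apply]

theorem totalDegree_pderiv_affineSection_le [Finite σ] {f : MvPolynomial σ F} {N : ℕ}
    (hf : f.IsHomogeneous N) (v : σ → F) (e : τ → σ → F) (i : τ) :
    (pderiv i (affineSection f v e)).totalDegree ≤ N - 1 := by
  have := Fintype.ofFinite σ
  rw [pderiv_affineSection]
  refine totalDegree_finsetSum_le fun j _ => (totalDegree_mul _ _).trans ?_
  rw [totalDegree_C, add_zero]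
  exact totalDegree_affineSection_le hf.pderiv v e

end AffineSection

section StohrVoloch

variable {F σ τ : Type*} [Field F] [Fintype F] [Fintype τ]

/-- The polynomial whose zeros on the curve `g = 0` are the points `P` such that the image of `P`
under the `F`-Frobenius map lies on the tangent line at `P` (Stöhr and Voloch). -/
noncomputable def frobeniusTangent (g : MvPolynomial τ F) : MvPolynomial τ F :=
  ∑ i, (X i ^ Fintype.card F - X i) * pderiv i g

theorem totalDegree_frobeniusTangent_le {g : MvPolynomial τ F} {d : ℕ}
    (hg : ∀ i, (pderiv i g).totalDegree ≤ d) :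
    (frobeniusTangent g).totalDegree ≤ Fintype.card F + d := by
  refine totalDegree_finsetSum_le fun i _ => (totalDegree_mul _ _).trans (add_le_add ?_ (hg i))
  refine (totalDegree_sub _ _).trans (max_le ?_ ?_)
  · exact (totalDegree_pow _ _).trans (by rw [totalDegree_X, mul_one])
  · rw [totalDegree_X]
    exact Fintype.card_pos

theorem coeff_pencil_frobeniusTangent {R : Type*} [CommRing R] [Algebra F R]
    {g : MvPolynomial τ F} {d : ℕ} (hg : ∀ i, (pderiv i g).totalDegree ≤ d) (w : τ → R) :
    (pencil (frobeniusTangent g) 0 w).coeff (Fintype.card F + d) =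
      ∑ i, w i ^ Fintype.card F * (pencil (pderiv i g) 0 w).coeff d := by
  have hpencil : pencil (frobeniusTangent g) 0 w = ∑ i,
      (Polynomial.C (w i ^ Fintype.card F) * Polynomial.X ^ Fintype.card F -
        Polynomial.C (w i) * Polynomial.X) * pencil (pderiv i g) 0 w := by
    simp [pencil, frobeniusTangent, mul_pow]
  have hQ : 1 < Fintype.card F := Fintype.one_lt_card
  rw [hpencil, Polynomial.finsetSum_coeff]
  refine Finset.sum_congr rfl fun i _ => ?_
  rw [Polynomial.coeff_mul_add_eq_of_natDegree_le _
    ((natDegree_pencil_le_totalDegree _ _ _).trans (hg i))]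
  · simp [Polynomial.coeff_X, hQ.ne, -map_pow]
  · compute_degree
    exact max_le le_rfl hQ.le

theorem isCoprime_X_pow_card_sub_X {p : F[X]} (hp : ∀ a, p.eval a ≠ 0) :
    IsCoprime p (Polynomial.X ^ Fintype.card F - Polynomial.X) := by
  refine isCoprime_of_prime_dvd (fun h => hp 0 (by simp [h.1])) fun r hr hrp hrX => ?_
  rw [← Nat.card_eq_fintype_card] at hrX
  have hsplits := (Polynomial.splits_X_pow_nat_card_sub_X (K := F)).of_dvd
    (FiniteField.X_pow_card_sub_X_ne_zero _ Finite.one_lt_card) hrX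
  obtain ⟨a, ha⟩ := hsplits.exists_eval_eq_zero
    (Polynomial.degree_pos_of_irreducible hr.irreducible).ne'
  exact hp a (Polynomial.eval_eq_zero_of_dvd_of_eval_eq_zero hrp ha)

variable [Finite σ]

/-- The part of top degree of a plane section, dehomogenised, is the binary form
`γ = f (e 1 + X • e 0)`; for the Frobenius-tangent polynomial it is `(X ^ |F| - X) γ' + N γ`. -/
theorem coeff_pencil_frobeniusTangent_affineSection {f : MvPolynomial σ F} {N : ℕ}
    (hf : f.IsHomogeneous N) (v : σ → F) (e : Fin 2 → σ → F) :
    (pencil (frobeniusTangent (affineSection f v e)) 0 ![Polynomial.X, 1]).coeff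
        (Fintype.card F + (N - 1)) =
      (Polynomial.X ^ Fintype.card F - Polynomial.X) *
        Polynomial.derivative (pencil f (e 1) (e 0)) + (N : F[X]) * pencil f (e 1) (e 0) := by
  have := Fintype.ofFinite σ
  have htop : ∀ i, (pencil (pderiv i (affineSection f v e)) 0 ![Polynomial.X, 1]).coeff (N - 1) =
      ∑ j, pencil (pderiv j f) (e 1) (e 0) * Polynomial.C (e i j) := by
    intro i
    have hmap : pencil (pderiv i (affineSection f v e)) 0 ![Polynomial.X, 1] =
        ∑ j, pencil (affineSection (pderiv j f) v e) 0 ![Polynomial.X, 1] *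
          Polynomial.C (Polynomial.C (e i j)) := by
      rw [pderiv_affineSection]
      simp [pencil, Polynomial.algebraMap_apply]
    rw [hmap, Polynomial.finsetSum_coeff]
    refine Finset.sum_congr rfl fun j _ => ?_
    rw [Polynomial.coeff_mul_C, coeff_pencil_affineSection hf.pderiv, pencil]
    congr 3
    ext1 k
    simp [add_comm]
  have heuler : ∑ j, pencil (pderiv j f) (e 1) (e 0) *
      (Polynomial.C (e 1 j) + Polynomial.C (e 0 j) * Polynomial.X) =
        (N : F[X]) * pencil f (e 1) (e 0) := by
    have h := congrArg (pencil · (e 1) (e 0)) hf.sum_X_mul_pderiv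
    simp only [pencil, map_sum, map_mul, aeval_X, nsmul_eq_mul, map_natCast] at h
    rw [pencil, ← h]
    exact Finset.sum_congr rfl fun j _ => mul_comm _ _
  rw [coeff_pencil_frobeniusTangent (totalDegree_pderiv_affineSection_le hf v e),
    Fin.sum_univ_two, htop, htop, ← heuler, derivative_pencil, Matrix.cons_val_zero,
    Matrix.cons_val_one, Matrix.cons_val_zero, one_pow, one_mul]
  simp only [mul_add, Finset.sum_add_distrib, ← mul_assoc, ← Finset.sum_mul]
  ring

theorem not_dvd_frobeniusTangent {f : MvPolynomial σ F} {N : ℕ} (hf : f.IsHomogeneous N)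
    (hN : (N : F) ≠ 0) (v : σ → F) {e : Fin 2 → σ → F}
    (hext : ∀ s : Fin 2 → F, s ≠ 0 → eval (∑ i, s i • e i) f ≠ 0) :
    ¬ affineSection f v e ∣ frobeniusTangent (affineSection f v e) := by
  intro hdvd
  set γ := pencil f (e 1) (e 0) with hγ
  have hN0 : N ≠ 0 := fun h => hN (by simp [h])
  have hQ : 0 < Fintype.card F := Fintype.card_pos
  have hγN : γ.coeff N ≠ 0 := by
    simpa [hγ, coeff_pencil_of_isHomogeneous hf] using hext ![1, 0] (by simp)
  have hγroot : ∀ a, γ.eval a ≠ 0 := fun a => by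
    simpa [hγ, eval_pencil_self, add_comm] using hext ![a, 1] (by simp)
  have htop : (pencil (affineSection f v e) 0 ![Polynomial.X, 1]).coeff N = γ := by
    rw [coeff_pencil_affineSection hf, hγ, pencil]
    congr 2
    ext1 j
    simp [add_comm]
  have hNQ : Fintype.card F + (N - 1) = N + (Fintype.card F - 1) := by omega
  have hγdvd := coeff_pencil_dvd_coeff_pencil hdvd (totalDegree_affineSection_le hf v e)
    (hNQ ▸ totalDegree_frobeniusTangent_le (totalDegree_pderiv_affineSection_le hf v e))
    (u := 0) (w := ![Polynomial.X, 1])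
    (by rw [htop]; rintro h; simp [h] at hγN)
  rw [← hNQ, coeff_pencil_frobeniusTangent_affineSection hf, htop, ← hγ,
    dvd_add_left (dvd_mul_left _ _)] at hγdvd
  have hγ' := (isCoprime_X_pow_card_sub_X hγroot).dvd_of_dvd_mul_left hγdvd
  have hderiv : Polynomial.derivative γ = 0 := by
    refine Polynomial.eq_zero_of_dvd_of_natDegree_lt hγ' (Polynomial.natDegree_derivative_lt ?_)
    rw [Polynomial.natDegree_eq_of_le_of_coeff_ne_zero (natDegree_pencil_le hf _ _) hγN]
    exact hN0
  have hcoeff := congrArg (Polynomial.coeff · (N - 1)) hderiv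
  simp only [Polynomial.coeff_derivative, Polynomial.coeff_zero, Nat.sub_add_cancel
    (Nat.one_le_iff_ne_zero.mpr hN0), Nat.cast_pred (Nat.pos_of_ne_zero hN0),
    sub_add_cancel] at hcoeff
  exact mul_ne_zero hγN hN hcoeff

end StohrVoloch

section Counting

theorem sum_card_translate {A I : Type*} [AddGroup A] [Fintype A] [Finite I] (w : I → A)
    (P : A → Prop) :
    ∑ v : A, Nat.card {i // P (v + w i)} = Nat.card I * Nat.card {v // P v} := by
  rw [← Nat.card_prod, ← Nat.card_sigma]
  exact Nat.card_congr
    { toFun := fun x => (x.2.1, ⟨x.1 + w x.2.1, x.2.2⟩)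
      invFun := fun y => ⟨y.2.1 - w y.1, y.1, by simpa using y.2.2⟩
      left_inv := fun ⟨v, i, h⟩ => by
        simp only [Sigma.mk.injEq, add_sub_cancel_right, true_and]
        congr!
        simp
      right_inv := fun ⟨i, v, h⟩ => by simp }

theorem card_mul_le_of_card_line_le {F A : Type*} [Field F] [Finite F] [AddCommGroup A]
    [Module F A] [Finite A] {P : A → Prop} {x₀ : A} {m : ℕ}
    (h : ∀ d : A, d ≠ 0 → Nat.card {t : Fˣ // P (x₀ + t • d)} ≤ m) :
    (Nat.card F - 1) * Nat.card {x // x ≠ x₀ ∧ P x} ≤ (Nat.card A - 1) * m := by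
  have := Fintype.ofFinite {d : A // d ≠ 0}
  let toPoint : (Σ d : {d : A // d ≠ 0}, {t : Fˣ // P (x₀ + t • d.1)}) ≃
      Fˣ × {x // x ≠ x₀ ∧ P x} :=
    { toFun := fun y =>
        (y.2.1, ⟨x₀ + y.2.1 • y.1.1, by simpa [smul_eq_zero_iff_eq] using y.1.2, y.2.2⟩)
      invFun := fun y => ⟨⟨y.1⁻¹ • (y.2.1 - x₀), by
        simpa [smul_eq_zero_iff_eq, sub_eq_zero] using y.2.2.1⟩, y.1,
        by simpa using y.2.2.2⟩
      left_inv := fun ⟨d, t, h⟩ => by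
        simp only [Sigma.mk.injEq, add_sub_cancel_left, inv_smul_smul, Subtype.coe_eta, true_and]
        congr!
        simp
      right_inv := fun ⟨t, x, h⟩ => by simp }
  have hcard : Nat.card {d : A // d ≠ 0} = Nat.card A - 1 := by
    rw [← Set.ncard_singleton (0 : A), ← Set.ncard_compl]
    rfl
  rw [← Nat.card_units, ← Nat.card_prod, ← Nat.card_congr toPoint, Nat.card_sigma, ← hcard,
    Nat.card_eq_fintype_card (α := {d : A // d ≠ 0}), ← smul_eq_mul]
  exact Finset.sum_le_card_nsmul _ _ _ fun d _ => h d d.2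

theorem card_eval_eq_zero_le {F : Type*} [Field F] {p : F[X]} (hp : p ≠ 0) :
    Nat.card {t // p.eval t = 0} ≤ p.natDegree := by
  refine le_of_eq_of_le ?_ (Polynomial.ncard_rootSet_le p F)
  exact Nat.card_congr (Equiv.subtypeEquivRight fun t => by simp [Polynomial.mem_rootSet, hp])

end Counting

section PlaneCurve

variable {F : Type*} [Field F]

theorem one_le_totalDegree_of_not_isUnit {σ : Type*} {g : MvPolynomial σ F} (h0 : g ≠ 0)
    (hg : ¬ IsUnit g) : 1 ≤ g.totalDegree := by
  by_contra! hlt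
  have hC := totalDegree_eq_zero_iff_eq_C.mp (Nat.lt_one_iff.mp hlt)
  refine hg (hC ▸ (isUnit_iff_ne_zero.mpr fun h => h0 ?_).map C)
  rw [hC, h, C_0]

variable [Finite F]

theorem card_units_zeros_le {σ : Type*} {g : MvPolynomial σ F} {P d : σ → F} (hP : eval P g = 0)
    (hd : pencil g P d ≠ 0) :
    Nat.card {t : Fˣ // eval (P + t • d) g = 0} ≤ g.totalDegree - 1 := by
  have hdiv := Polynomial.X_mul_divX_add (pencil g P d)
  rw [coeff_zero_pencil, aeval_eq_eval, hP, Polynomial.C_0, add_zero] at hdiv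
  have hdiv0 : (pencil g P d).divX ≠ 0 := fun h => hd (by rw [← hdiv, h, mul_zero])
  have := Polynomial.finite_setOfPred_isRoot hdiv0
  calc Nat.card {t : Fˣ // eval (P + t • d) g = 0}
      ≤ Nat.card {t : F // (pencil g P d).divX.eval t = 0} := by
        refine Nat.card_le_card_of_injective (fun t => ⟨(t.1 : F), ?_⟩) fun s t hst => by
          simpa [Subtype.ext_iff, Units.ext_iff] using hst
        have h := eval_pencil_self g P d (t.1 : F)
        rwa [← hdiv, Polynomial.eval_mul, Polynomial.eval_X, ← Units.smul_def, t.2, mul_eq_zero,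
          or_iff_right t.1.ne_zero] at h
    _ ≤ (pencil g P d).divX.natDegree := card_eval_eq_zero_le hdiv0
    _ ≤ g.totalDegree - 1 := by
        rw [Polynomial.natDegree_divX_eq_natDegree_tsub_one]
        exact Nat.sub_le_sub_right (natDegree_pencil_le_totalDegree _ _ _) 1

theorem card_zeros_le_of_pencil_ne_zero {g : MvPolynomial (Fin 2) F}
    (hg : ∀ P d : Fin 2 → F, d ≠ 0 → pencil g P d ≠ 0) :
    Nat.card {s // eval s g = 0} ≤ 1 + (Nat.card F + 1) * (g.totalDegree - 1) := by
  rcases isEmpty_or_nonempty {s // eval s g = 0} with _ | ⟨P, hP⟩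
  · simp
  have hcount := card_mul_le_of_card_line_le (P := fun s => eval s g = 0)
    fun d hd => card_units_zeros_le hP (hg P d hd)
  have hzeros : Nat.card {s // s ≠ P ∧ eval s g = 0} + 1 = Nat.card {s // eval s g = 0} := by
    rw [Nat.card_congr (Equiv.subtypeEquivRight fun s => and_comm)]
    exact Set.ncard_sdiff_singleton_add_one (s := {s | eval s g = 0}) hP
  have hplane : Nat.card (Fin 2 → F) - 1 = (Nat.card F - 1) * (Nat.card F + 1) := by
    rw [Nat.card_fun, Nat.card_fin, ← one_pow 2, Nat.sq_sub_sq, one_pow, mul_comm]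
  rw [hplane, mul_assoc] at hcount
  rw [← hzeros, add_comm]
  gcongr
  exact Nat.le_of_mul_le_mul_left hcount (Nat.sub_pos_of_lt Finite.one_lt_card)

theorem card_zeros_le_of_not_irreducible {g : MvPolynomial (Fin 2) F}
    (hg : ∀ P d : Fin 2 → F, d ≠ 0 → pencil g P d ≠ 0) (hunit : ¬ IsUnit g)
    (hirr : ¬ Irreducible g) :
    Nat.card {s // eval s g = 0} ≤ 2 + (Nat.card F + 1) * (g.totalDegree - 2) := by
  obtain ⟨a, b, rfl, ha, hb⟩ : ∃ a b, g = a * b ∧ ¬ IsUnit a ∧ ¬ IsUnit b := by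
    simpa [irreducible_iff, hunit] using hirr
  have hmul : ∀ P d : Fin 2 → F, pencil (a * b) P d = pencil a P d * pencil b P d :=
    fun P d => map_mul _ _ _
  have hab0 : a * b ≠ 0 := fun h => hg 0 1 one_ne_zero (by rw [h, pencil, map_zero])
  have hcarda := card_zeros_le_of_pencil_ne_zero (g := a) fun P d hd h =>
    hg P d hd (by rw [hmul, h, zero_mul])
  have hcardb := card_zeros_le_of_pencil_ne_zero (g := b) fun P d hd h =>
    hg P d hd (by rw [hmul, h, mul_zero])
  have hdega := one_le_totalDegree_of_not_isUnit (left_ne_zero_of_mul hab0) ha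
  have hdegb := one_le_totalDegree_of_not_isUnit (right_ne_zero_of_mul hab0) hb
  have hunion : Nat.card {s // eval s (a * b) = 0} ≤
      Nat.card {s // eval s a = 0} + Nat.card {s // eval s b = 0} := by
    simp only [map_mul, mul_eq_zero]
    exact Set.ncard_union_le {s | eval s a = 0} {s | eval s b = 0}
  rw [totalDegree_mul_of_isDomain (left_ne_zero_of_mul hab0) (right_ne_zero_of_mul hab0),
    show a.totalDegree + b.totalDegree - 2 = (a.totalDegree - 1) + (b.totalDegree - 1) by omega]
  linarith

end PlaneCurve

section Jets

variable {F τ : Type*} [Field F]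

theorem coeff_one_pencil_mul (p r : MvPolynomial τ F) (P w : τ → F) :
    (pencil (p * r) P w).coeff 1 =
      eval P p * (pencil r P w).coeff 1 + (pencil p P w).coeff 1 * eval P r := by
  have hmul : pencil (p * r) P w = pencil p P w * pencil r P w := map_mul _ _ _
  rw [hmul, Polynomial.coeff_mul]
  simp [Finset.Nat.antidiagonal_succ, coeff_zero_pencil, aeval_eq_eval]

/-- The value at `P` and the derivative at `P` in the direction `w P`, for all `P ∈ T`. -/
noncomputable def jets (T : Set (τ → F)) (w : (τ → F) → τ → F) :
    MvPolynomial τ F →ₗ[F] (T → F × F) :=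
  LinearMap.pi fun P =>
    ((Polynomial.lcoeff F 0).prod (Polynomial.lcoeff F 1)) ∘ₗ (aeval (R := F) fun i =>
      Polynomial.C (P.1 i) + Polynomial.C (w P i) * Polynomial.X).toLinearMap

theorem jets_apply (T : Set (τ → F)) (w : (τ → F) → τ → F) (p : MvPolynomial τ F) (P : T) :
    jets T w p P = (eval P.1 p, (pencil p P (w P)).coeff 1) := by
  rw [← aeval_eq_eval, ← coeff_zero_pencil]
  rfl

theorem jets_mul_eq_zero {T : Set (τ → F)} {w : (τ → F) → τ → F} {p : MvPolynomial τ F}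
    (hp : ∀ P ∈ T, eval P p = 0 ∧ (pencil p P (w P)).coeff 1 = 0) (r : MvPolynomial τ F) :
    jets T w (p * r) = 0 := by
  ext1 P
  obtain ⟨h0, h1⟩ := hp P P.2
  simp [jets_apply, coeff_one_pencil_mul, h0, h1]

theorem jets_surjective [Finite F] [Finite τ] (T : Set (τ → F)) {w : (τ → F) → τ → F}
    (hw : ∀ P, w P ≠ 0) : Function.Surjective (jets T w) := by
  classical
  have := Fintype.ofFinite F
  have := Fintype.ofFinite τ
  rw [← LinearMap.range_eq_top, eq_top_iff]
  rintro y -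
  rw [← Finset.univ_sum_single y]
  refine Submodule.sum_mem _ fun P _ => ?_
  obtain ⟨i, hi⟩ := Function.ne_iff.mp (hw P)
  set c := (pencil (indicator P.1 ^ 2) P (w P)).coeff 1 with hc
  set l := C (y P).1 + C (((y P).2 - c * (y P).1) / w P i) * (X i - C (P.1 i)) with hl
  have hl0 : eval P.1 l = (y P).1 := by simp [hl]
  have hl1 : (pencil l P (w P)).coeff 1 = (y P).2 - c * (y P).1 := by
    have hpencil : pencil l P (w P) = Polynomial.C (y P).1 +
        Polynomial.C (((y P).2 - c * (y P).1) / w P i * w P i) * Polynomial.X := by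
      simp [hl, pencil, mul_assoc]
    rw [hpencil, div_mul_cancel₀ _ hi]
    simp
  refine ⟨indicator P.1 ^ 2 * l, funext fun P' => ?_⟩
  rw [jets_apply, coeff_one_pencil_mul, map_mul, map_pow]
  rcases eq_or_ne P' P with rfl | hne
  · simp [eval_indicator_apply_eq_one, hl0, hl1, ← hc]
  · have h0 := eval_indicator_apply_eq_zero P'.1 P.1 (Subtype.coe_ne_coe.mpr hne)
    simp [hne, h0, sq, coeff_one_pencil_mul]

variable [Fintype F] [Fintype τ]

theorem pencil_frobeniusTangent (g : MvPolynomial τ F) (P w : τ → F) :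
    pencil (frobeniusTangent g) P w = Polynomial.X * ∑ i, Polynomial.C (w i) *
      (Polynomial.X ^ (Fintype.card F - 1) - 1) * pencil (pderiv i g) P w := by
  have hfrob : ∀ a b : F, (Polynomial.C a + Polynomial.C b * Polynomial.X) ^ Fintype.card F =
      Polynomial.C a + Polynomial.C b * (Polynomial.X ^ (Fintype.card F - 1) * Polynomial.X) := by
    intro a b
    rw [← FiniteField.expand_card, ← pow_succ, Nat.sub_add_cancel Fintype.card_pos]
    simp
  simp only [pencil, frobeniusTangent, map_sum, map_mul, map_sub, map_pow, aeval_X, hfrob,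
    Finset.mul_sum]
  exact Finset.sum_congr rfl fun i _ => by ring

theorem eval_frobeniusTangent (g : MvPolynomial τ F) (P : τ → F) :
    eval P (frobeniusTangent g) = 0 := by
  rw [← aeval_eq_eval, ← coeff_zero_pencil _ P 0, pencil_frobeniusTangent,
    Polynomial.coeff_X_mul_zero]

theorem coeff_one_pencil_frobeniusTangent (g : MvPolynomial τ F) (P w : τ → F) :
    (pencil (frobeniusTangent g) P w).coeff 1 = -tangentForm g P w := by
  have hQ : Fintype.card F - 1 ≠ 0 := (Nat.sub_pos_of_lt Fintype.one_lt_card).ne'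
  rw [pencil_frobeniusTangent, Polynomial.coeff_X_mul, Polynomial.finsetSum_coeff,
    tangentForm_apply, ← Finset.sum_neg_distrib]
  refine Finset.sum_congr rfl fun i _ => ?_
  simp [Polynomial.mul_coeff_zero, coeff_zero_pencil, Polynomial.coeff_X_pow, hQ.symm]

/-- Each zero of `g` is counted twice in the intersection of the curve with
`frobeniusTangent g = 0`, so Bézout applies with twice the number of zeros. -/
theorem two_mul_card_zeros_le_of_prime {g : MvPolynomial (Fin 2) F} (hg : Prime g)
    (hdvd : ¬ g ∣ frobeniusTangent g) :
    2 * Nat.card {s // eval s g = 0} ≤ g.totalDegree * (frobeniusTangent g).totalDegree := by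
  classical
  have htangent : ∀ P, ∃ w : Fin 2 → F, w ≠ 0 ∧ tangentForm g P w = 0 := by
    intro P
    have hker := LinearMap.ker_ne_bot_of_finrank_lt (f := tangentForm g P) (by simp)
    obtain ⟨w, hw, hw0⟩ := Submodule.exists_mem_ne_zero_of_ne_bot hker
    exact ⟨w, hw0, hw⟩
  choose w hw0 hw using htangent
  set T := {s | eval s g = 0}
  have hbezout := finrank_le_totalDegree_mul_totalDegree hg hdvd (jets_surjective T hw0)
    (jets_mul_eq_zero fun P hP => ⟨hP, by rw [coeff_one_pencil, hw]⟩)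
    (jets_mul_eq_zero fun P _ => ⟨eval_frobeniusTangent g P, by
      rw [coeff_one_pencil_frobeniusTangent, hw, neg_zero]⟩)
  rw [finrank_pi_fintype] at hbezout
  simp only [finrank_prod, finrank_self, Finset.sum_const, Finset.card_univ, smul_eq_mul,
    ← Nat.card_eq_fintype_card] at hbezout
  exact (mul_comm _ _).trans_le hbezout

end Jets

section ExternalLine

variable {F σ : Type*} [Field F] [Fintype F] {f : MvPolynomial σ F} {e : Fin 2 → σ → F}

theorem two_mul_card_zeros_affineSection_le [Finite σ] {N : ℕ} (hf : f.IsHomogeneous N)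
    (hN : (N : F) ≠ 0) {v : σ → F} (hirr : Irreducible (affineSection f v e))
    (hext : ∀ s : Fin 2 → F, s ≠ 0 → eval (∑ i, s i • e i) f ≠ 0) :
    2 * Nat.card {s : Fin 2 → F // eval (v + ∑ i, s i • e i) f = 0} ≤
      N * (Fintype.card F + (N - 1)) := by
  simp only [← eval_affineSection]
  exact (two_mul_card_zeros_le_of_prime hirr.prime (not_dvd_frobeniusTangent hf hN v hext)).trans
    (Nat.mul_le_mul (totalDegree_affineSection_le hf v e)
      (totalDegree_frobeniusTangent_le fun i => totalDegree_pderiv_affineSection_le hf v e i))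

theorem card_zeros_affineSection_le {N : ℕ} (hf : f.IsHomogeneous N) (hN : N ≠ 0) {v : σ → F}
    (hirr : ¬ Irreducible (affineSection f v e))
    (hext : ∀ s : Fin 2 → F, s ≠ 0 → eval (∑ i, s i • e i) f ≠ 0) :
    Nat.card {s : Fin 2 → F // eval (v + ∑ i, s i • e i) f = 0} ≤
      2 + (Fintype.card F + 1) * (N - 2) := by
  have hcoeff : ∀ P d : Fin 2 → F, d ≠ 0 → (pencil (affineSection f v e) P d).coeff N ≠ 0 := by
    intro P d hd
    rw [coeff_pencil_affineSection hf, aeval_eq_eval]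
    convert hext d hd using 3
    ext j
    simp [mul_comm]
  have hunit : ¬ IsUnit (affineSection f v e) := by
    intro hu
    obtain ⟨r, -, hr⟩ := MvPolynomial.isUnit_iff_eq_C_of_isReduced.mp hu
    refine hcoeff 0 1 one_ne_zero ?_
    rw [hr, pencil, aeval_C]
    exact Polynomial.coeff_C_of_ne_zero hN
  have hpencil : ∀ P d : Fin 2 → F, d ≠ 0 → pencil (affineSection f v e) P d ≠ 0 :=
    fun P d hd h => hcoeff P d hd (by rw [h, Polynomial.coeff_zero])
  simp only [← eval_affineSection, ← Nat.card_eq_fintype_card]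
  refine (card_zeros_le_of_not_irreducible hpencil hunit hirr).trans ?_
  gcongr
  exact totalDegree_affineSection_le hf v e

variable [Finite σ] {q : ℕ}

theorem card_zeros_affineSection_lt (hq : 2 < q) (hcard : Fintype.card F = q ^ 2)
    (hf : f.IsHomogeneous (q + 1)) (v : σ → F)
    (hext : ∀ s : Fin 2 → F, s ≠ 0 → eval (∑ i, s i • e i) f ≠ 0) :
    Nat.card {s : Fin 2 → F // eval (v + ∑ i, s i • e i) f = 0} < q ^ 3 := by
  by_cases hirr : Irreducible (affineSection f v e)
  · have hN : ((q + 1 : ℕ) : F) ≠ 0 := by simp [natCast_eq_zero_of_card_eq_sq hcard]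
    have hle := two_mul_card_zeros_affineSection_le hf hN hirr hext
    rw [hcard, Nat.add_sub_cancel] at hle
    nlinarith
  · have hle := card_zeros_affineSection_le hf q.succ_ne_zero hirr hext
    obtain ⟨r, rfl⟩ : ∃ r, q = r + 1 := ⟨q - 1, by omega⟩
    rw [hcard, show r + 1 + 1 - 2 = r by omega] at hle
    nlinarith

open scoped Classical in
theorem exists_eval_eq_zero_of_card_zeros (hq : 2 < q) (hcard : Fintype.card F = q ^ 2)
    (hf : f.IsHomogeneous (q + 1))
    (hZ : Nat.card (σ → F) * (q ^ 3 - 1) < q ^ 4 * Nat.card {v // eval v f = 0})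
    (e : Fin 2 → σ → F) : ∃ s : Fin 2 → F, s ≠ 0 ∧ eval (∑ i, s i • e i) f = 0 := by
  by_contra! hext
  have := Fintype.ofFinite σ
  refine hZ.not_ge ?_
  calc q ^ 4 * Nat.card {v // eval v f = 0}
      = ∑ v : σ → F, Nat.card {s : Fin 2 → F // eval (v + ∑ i, s i • e i) f = 0} := by
        rw [sum_card_translate (fun s : Fin 2 → F => ∑ i, s i • e i) fun v => eval v f = 0]
        simp [hcard, ← pow_mul]
    _ ≤ ∑ v : σ → F, (q ^ 3 - 1) := Finset.sum_le_sum fun v _ =>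
        Nat.le_sub_one_of_lt (card_zeros_affineSection_lt hq hcard hf v hext)
    _ = Nat.card (σ → F) * (q ^ 3 - 1) := by simp

end ExternalLine

section BoseBurton

variable {F V : Type*} [Field F] [Finite F] [AddCommGroup V] [Module F V] [Finite V]

/-- Projecting from a point `x + y` outside `A` maps `A` onto the quotient since `A` meets every
line, and then injectively by cardinality; but `x` and `-y` have the same image. -/
theorem add_mem_of_meets_lines {A : Set V} (hsmul : ∀ (c : F), ∀ x ∈ A, c • x ∈ A)
    (hline : ∀ x y : V, ∃ s t : F, (s ≠ 0 ∨ t ≠ 0) ∧ s • x + t • y ∈ A)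
    (hcard : A.ncard * Nat.card F ≤ Nat.card V) {x y : V} (hx : x ∈ A) (hy : y ∈ A) :
    x + y ∈ A := by
  by_contra hxy
  have h0 : (0 : V) ∈ A := by simpa using hsmul 0 x hx
  have hxy0 : x + y ≠ 0 := fun h => hxy (h ▸ h0)
  let φ : A → V ⧸ F ∙ (x + y) := fun a => Submodule.Quotient.mk a.1
  have hsurj : Function.Surjective φ := by
    intro z
    obtain ⟨z, rfl⟩ := Submodule.Quotient.mk_surjective _ z
    obtain ⟨s, t, hst, hA⟩ := hline (x + y) z
    have ht : t ≠ 0 := by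
      rintro rfl
      have hs : s ≠ 0 := by simpa using hst
      exact hxy (by simpa [smul_smul, hs, ← smul_add] using hsmul s⁻¹ _ hA)
    refine ⟨⟨_, hsmul t⁻¹ _ hA⟩, (Submodule.Quotient.eq _).mpr ?_⟩
    refine Submodule.mem_span_singleton.mpr ⟨t⁻¹ * s, ?_⟩
    simp only [smul_add, smul_smul, inv_mul_cancel₀ ht, one_smul, add_sub_cancel_right]
  have hquot : Nat.card F * Nat.card (V ⧸ F ∙ (x + y)) = Nat.card V := by
    rw [Submodule.card_eq_card_quotient_mul_card (F ∙ (x + y)),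
      Module.natCard_eq_pow_finrank (K := F) (V := F ∙ (x + y)), finrank_span_singleton hxy0,
      pow_one, mul_comm]
  have hle : Nat.card A ≤ Nat.card (V ⧸ F ∙ (x + y)) := by
    refine Nat.le_of_mul_le_mul_left ?_ (Nat.card_pos (α := F))
    rwa [hquot, mul_comm]
  have hneg : -y ∈ A := by simpa using hsmul (-1) y hy
  have heq : (⟨x, hx⟩ : A) = ⟨-y, hneg⟩ := (hsurj.bijective_of_nat_card_le hle).injective
    ((Submodule.Quotient.eq _).mpr (by simp))
  exact hxy0 (eq_neg_iff_add_eq_zero.mp (congrArg Subtype.val heq))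

theorem exists_submodule_coe_eq_of_meets_lines {A : Set V} (hA : A.Nonempty)
    (hsmul : ∀ (c : F), ∀ x ∈ A, c • x ∈ A)
    (hline : ∀ x y : V, ∃ s t : F, (s ≠ 0 ∨ t ≠ 0) ∧ s • x + t • y ∈ A)
    (hcard : A.ncard * Nat.card F ≤ Nat.card V) : ∃ π : Submodule F V, (π : Set V) = A :=
  ⟨{ carrier := A
     add_mem' := add_mem_of_meets_lines hsmul hline hcard
     zero_mem' := by
      obtain ⟨x, hx⟩ := hA
      simpa using hsmul 0 x hx
     smul_mem' := fun c x hx => hsmul c x hx }, rfl⟩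

end BoseBurton

section LinearSection

variable {F σ : Type*} [Field F] {f : MvPolynomial σ F}

theorem natDegree_pencil_le_of_eval_eq_zero {N : ℕ} (hf : f.IsHomogeneous (N + 1)) (u : σ → F)
    {d : σ → F} (hd : eval d f = 0) : (pencil f u d).natDegree ≤ N := by
  rw [Polynomial.natDegree_le_iff_coeff_eq_zero]
  intro k hk
  rcases (Nat.succ_le_of_lt hk).eq_or_lt with rfl | hlt
  · rw [Nat.succ_eq_add_one, coeff_pencil_of_isHomogeneous hf, aeval_eq_eval, hd]
  · exact Polynomial.coeff_eq_zero_of_natDegree_lt ((natDegree_pencil_le hf u d).trans_lt hlt)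

/-- The number of zeros of `f` in the coset `u + π`. -/
noncomputable def cosetZeros (f : MvPolynomial σ F) (π : Submodule F (σ → F)) (u : σ → F) : ℕ :=
  Nat.card {x : π // eval (u + x.1) f = 0}

theorem sum_card_line [Fintype F] {q : ℕ} {π : Submodule F (σ → F)} [Fintype π]
    (hcard : Fintype.card F = q ^ 2) (u : σ → F) (d : π) :
    ∑ x : π, Nat.card {t : F // eval (u + x.1 + t • d.1) f = 0} =
      q ^ 2 * cosetZeros f π u := by
  have hsum := sum_card_translate (fun t : F => t • d) fun x : π => eval (u + x.1) f = 0
  rw [Nat.card_eq_fintype_card (α := F), hcard] at hsum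
  simpa only [Submodule.coe_add, Submodule.coe_smul, add_assoc, cosetZeros] using hsum

variable [Fintype σ]

theorem coeff_pencil_eq_tangentForm {N : ℕ} (hf : f.IsHomogeneous (N + 1)) (u d : σ → F) :
    (pencil f u d).coeff N = tangentForm f d u := by
  rw [coeff_pencil_comm hf u d rfl, coeff_one_pencil]

variable [Fintype F] {q : ℕ} {W π U : Submodule F (σ → F)} {u d : σ → F}

theorem sum_ite_mem_submodule [DecidableEq σ] (U : Submodule F (σ → F)) [DecidablePred (· ∈ U)]
    (c : ℕ) : ∑ v : σ → F, (if v ∈ U then c else 0) = Nat.card U * c := by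
  rw [← Finset.sum_filter, Finset.sum_const, smul_eq_mul, ← Fintype.card_subtype,
    Nat.card_eq_fintype_card]

/-- A hypersurface of degree `q + 1` over the field with `q ^ 2` elements meeting the subspace `W`
in a hyperplane `π` of `W`, and having as many zeros as a Hermitian variety which meets `W` in
`π`. -/
structure IsLinearSection (q : ℕ) (f : MvPolynomial σ F) (W π : Submodule F (σ → F)) : Prop where
  two_lt : 2 < q
  card_eq : Fintype.card F = q ^ 2
  homogeneous : f.IsHomogeneous (q + 1)
  le : π ≤ W
  finrank_add_one : finrank F π + 1 = finrank F W
  finrank_add_two_le : finrank F W + 2 ≤ Fintype.card σ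
  eval_eq_zero_iff : ∀ v ∈ W, eval v f = 0 ↔ v ∈ π
  exists_eval_ne_zero : ∀ U : Submodule F (σ → F), finrank F U = finrank F W →
    ∃ v ∈ U, eval v f ≠ 0
  card_zeros : q * Nat.card {v // eval v f = 0} + Nat.card W =
    Nat.card (σ → F) + q * Nat.card π

namespace IsLinearSection

theorem lt_card (h : IsLinearSection q f W π) : q < Fintype.card F := by
  rw [h.card_eq]
  nlinarith [h.two_lt]

theorem eval_eq_zero (h : IsLinearSection q f W π) (hd : d ∈ π) : eval d f = 0 :=
  (h.eval_eq_zero_iff d (h.le hd)).mpr hd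

theorem natDegree_pencil_le (h : IsLinearSection q f W π) (u : σ → F) (hd : d ∈ π) :
    (pencil f u d).natDegree ≤ q :=
  natDegree_pencil_le_of_eval_eq_zero h.homogeneous u (h.eval_eq_zero hd)

theorem tangentForm_eq_zero (h : IsLinearSection q f W π) {x : σ → F} (hd : d ∈ π) (hx : x ∈ π) :
    tangentForm f d x = 0 := by
  have hpencil : pencil f x d = 0 :=
    eq_zero_of_natDegree_lt_card ((h.natDegree_pencil_le x hd).trans_lt h.lt_card) fun t => by
      rw [eval_pencil_self]
      exact h.eval_eq_zero (π.add_mem hx (π.smul_mem t hd))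
  rw [← coeff_pencil_eq_tangentForm h.homogeneous, hpencil, Polynomial.coeff_zero]

theorem card_line_le (h : IsLinearSection q f W π) (hd : d ∈ π) (hu : tangentForm f d u ≠ 0) :
    Nat.card {t : F // eval (u + t • d) f = 0} ≤ q := by
  have hne : pencil f u d ≠ 0 := fun h0 => hu <| by
    rw [← coeff_pencil_eq_tangentForm h.homogeneous, h0, Polynomial.coeff_zero]
  simpa only [eval_pencil_self] using (card_eval_eq_zero_le hne).trans (h.natDegree_pencil_le u hd)

theorem tangentForm_add (h : IsLinearSection q f W π) (hd : d ∈ π) (u : σ → F) (x : π) :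
    tangentForm f d (u + x) = tangentForm f d u := by
  rw [map_add, h.tangentForm_eq_zero hd x.2, add_zero]

theorem mul_cosetZeros_le_of_tangentForm_ne_zero (h : IsLinearSection q f W π) (hd : d ∈ π)
    (hu : tangentForm f d u ≠ 0) : q * cosetZeros f π u ≤ Nat.card π := by
  have := Fintype.ofFinite π
  have hsum : q ^ 2 * cosetZeros f π u ≤ Nat.card π * q := by
    rw [← sum_card_line h.card_eq u ⟨d, hd⟩, Nat.card_eq_fintype_card, ← smul_eq_mul,
      ← Finset.card_univ]
    exact Finset.sum_le_card_nsmul _ _ _ fun x _ =>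
      h.card_line_le hd (by rwa [h.tangentForm_add hd])
  have hq : 0 < q := by linarith [h.two_lt]
  nlinarith

theorem exists_eval_add_ne_zero (h : IsLinearSection q f W π) (hu : u ∉ W) :
    ∃ x : π, eval (u + x.1) f ≠ 0 := by
  by_contra! hzero
  have hu0 : u ≠ 0 := by
    rintro rfl
    exact hu W.zero_mem
  have hdisj : π ⊓ F ∙ u = ⊥ := disjoint_iff.mp <|
    (Submodule.disjoint_span_singleton' hu0).mpr fun hπ => hu (h.le hπ)
  have hfinrank := Submodule.finrank_sup_add_finrank_inf_eq π (F ∙ u)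
  rw [hdisj, finrank_bot, finrank_span_singleton hu0, h.finrank_add_one] at hfinrank
  obtain ⟨v, hv, hfv⟩ := h.exists_eval_ne_zero _ hfinrank
  obtain ⟨x, hx, y, hy, rfl⟩ := Submodule.mem_sup.mp hv
  obtain ⟨c, rfl⟩ := Submodule.mem_span_singleton.mp hy
  refine hfv ?_
  rcases eq_or_ne c 0 with rfl | hc
  · rw [zero_smul, add_zero, h.eval_eq_zero hx]
  · have hsmul : x + c • u = c • (u + c⁻¹ • x) := by
      rw [smul_add, smul_inv_smul₀ hc, add_comm]
    rw [hsmul, eval_smul_of_isHomogeneous h.homogeneous, hzero ⟨_, π.smul_mem _ hx⟩, mul_zero]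

theorem card_units_line_le (h : IsLinearSection q f W π) {d : σ → F} (hd : d ∈ π)
    (htangent : tangentForm f d u = 0) (hu : eval u f ≠ 0) :
    Nat.card {t : Fˣ // eval (u + t • d) f = 0} ≤ q - 1 := by
  have hne : pencil f u d ≠ 0 := fun h0 => hu <| by
    rw [← aeval_eq_eval, ← coeff_zero_pencil f u d, h0, Polynomial.coeff_zero]
  have hdeg : (pencil f u d).natDegree ≤ q - 1 := by
    refine Nat.le_sub_one_of_lt ((h.natDegree_pencil_le u hd).lt_of_ne fun heq => hne ?_)
    rw [← Polynomial.leadingCoeff_eq_zero, Polynomial.leadingCoeff, heq,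
      coeff_pencil_eq_tangentForm h.homogeneous, htangent]
  refine le_trans ?_ ((card_eval_eq_zero_le hne).trans hdeg)
  exact Nat.card_le_card_of_injective
    (fun t => ⟨(t.1 : F), by rw [eval_pencil_self]; exact t.2⟩)
    fun s t hst => Subtype.ext (Units.ext (congrArg Subtype.val hst))

theorem mul_cosetZeros_lt_of_forall_tangentForm_eq_zero (h : IsLinearSection q f W π) (hu : u ∉ W)
    (htangent : ∀ d ∈ π, tangentForm f d u = 0) : q * cosetZeros f π u < Nat.card π := by
  obtain ⟨x₀, hx₀⟩ := h.exists_eval_add_ne_zero hu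
  have hcount := card_mul_le_of_card_line_le (F := F) (P := fun x : π => eval (u + x.1) f = 0)
    (x₀ := x₀) (m := q - 1) fun d _ => by
      simpa only [add_assoc, Submodule.coe_add, Submodule.coe_smul, Units.smul_def] using
        h.card_units_line_le (u := u + x₀.1) d.2 (by rw [h.tangentForm_add d.2, htangent d d.2]) hx₀
  have hcoset : Nat.card {x : π // x ≠ x₀ ∧ eval (u + x.1) f = 0} = cosetZeros f π u :=
    Nat.card_congr <| Equiv.subtypeEquivRight fun x =>
      and_iff_right_of_imp fun hx hxx₀ => hx₀ (hxx₀ ▸ hx)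
  rw [hcoset, Nat.card_eq_fintype_card (α := F), h.card_eq] at hcount
  obtain ⟨r, rfl⟩ : ∃ r, q = r + 1 := ⟨q - 1, by have := h.two_lt; omega⟩
  obtain ⟨s, hs⟩ : ∃ s, Nat.card π = s + 1 :=
    ⟨Nat.card π - 1, by have := Nat.card_pos (α := π); omega⟩
  rw [hs, show (r + 1) ^ 2 - 1 = r * (r + 2) by ring_nf; omega, Nat.add_sub_cancel,
    Nat.add_sub_cancel, mul_assoc, mul_comm s] at hcount
  have hr : 0 < r := by have := h.two_lt; omega
  have := Nat.le_of_mul_le_mul_left hcount hr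
  rw [hs]
  nlinarith

theorem mul_cosetZeros_le (h : IsLinearSection q f W π) (hu : u ∉ W) :
    q * cosetZeros f π u ≤ Nat.card π := by
  by_cases htangent : ∀ d ∈ π, tangentForm f d u = 0
  · exact (h.mul_cosetZeros_lt_of_forall_tangentForm_eq_zero hu htangent).le
  · push Not at htangent
    obtain ⟨d, hd, hdu⟩ := htangent
    exact h.mul_cosetZeros_le_of_tangentForm_ne_zero hd hdu

theorem cosetZeros_of_mem (h : IsLinearSection q f W π) (hu : u ∈ π) :
    cosetZeros f π u = Nat.card π :=
  Nat.card_congr (Equiv.subtypeUnivEquiv fun x => h.eval_eq_zero (π.add_mem hu x.2))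

theorem cosetZeros_of_mem_of_notMem (h : IsLinearSection q f W π) (hu : u ∈ W) (hu' : u ∉ π) :
    cosetZeros f π u = 0 := by
  refine Nat.card_eq_zero.mpr (.inl ⟨fun x => hu' ?_⟩)
  have hx := (h.eval_eq_zero_iff _ (W.add_mem hu (h.le x.1.2))).mp x.2
  simpa using π.sub_mem hx x.1.2

open scoped Classical in
theorem mul_cosetZeros_add_le (h : IsLinearSection q f W π) (u : σ → F) :
    q * cosetZeros f π u + (if u ∈ W then Nat.card π else 0) ≤
      Nat.card π + if u ∈ π then q * Nat.card π else 0 := by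
  by_cases huπ : u ∈ π
  · simp [huπ, h.le huπ, h.cosetZeros_of_mem huπ, add_comm]
  by_cases huW : u ∈ W
  · simp [huπ, huW, h.cosetZeros_of_mem_of_notMem huW huπ]
  · simpa [huπ, huW] using h.mul_cosetZeros_le huW

theorem mul_cosetZeros_eq (h : IsLinearSection q f W π) (hu : u ∉ W) :
    q * cosetZeros f π u = Nat.card π := by
  classical
  have hsum : ∑ v : σ → F, (q * cosetZeros f π v + if v ∈ W then Nat.card π else 0) =
      ∑ v : σ → F, (Nat.card π + if v ∈ π then q * Nat.card π else 0) := by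
    have hcosets : ∑ v : σ → F, cosetZeros f π v = Nat.card π * Nat.card {v // eval v f = 0} :=
      sum_card_translate (fun x : π => (x : σ → F)) fun v => eval v f = 0
    simp only [Finset.sum_add_distrib, ← Finset.mul_sum, hcosets, sum_ite_mem_submodule,
      Finset.sum_const, Finset.card_univ, ← Nat.card_eq_fintype_card, smul_eq_mul]
    linear_combination Nat.card π * h.card_zeros
  have heq := (Finset.sum_eq_sum_iff_of_le fun v _ => h.mul_cosetZeros_add_le v).mp hsum u
    (Finset.mem_univ u)
  simpa [hu, show u ∉ π from fun hπ => hu (h.le hπ)] using heq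

theorem exists_tangentForm_ne_zero (h : IsLinearSection q f W π) (hu : u ∉ W) :
    ∃ d ∈ π, tangentForm f d u ≠ 0 := by
  by_contra! htangent
  exact (h.mul_cosetZeros_lt_of_forall_tangentForm_eq_zero hu htangent).ne (h.mul_cosetZeros_eq hu)

theorem card_line_eq (h : IsLinearSection q f W π) (hu : u ∉ W) (hd : d ∈ π)
    (hdu : tangentForm f d u ≠ 0) {x : σ → F} (hx : x ∈ π) :
    Nat.card {t : F // eval (u + x + t • d) f = 0} = q := by
  have := Fintype.ofFinite π
  have hle : ∀ x ∈ (Finset.univ : Finset π),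
      Nat.card {t : F // eval (u + x.1 + t • d) f = 0} ≤ q := fun x _ =>
    h.card_line_le hd (by rwa [h.tangentForm_add hd])
  refine (Finset.sum_eq_sum_iff_of_le hle).mp ?_ ⟨x, hx⟩ (Finset.mem_univ _)
  rw [sum_card_line h.card_eq u ⟨d, hd⟩, Finset.sum_const, Finset.card_univ,
    ← Nat.card_eq_fintype_card, ← h.mul_cosetZeros_eq hu, smul_eq_mul]
  ring

theorem card_zeros_inf (h : IsLinearSection q f W π) (hWU : W ≤ U) :
    q * Nat.card {v // v ∈ U ∧ eval v f = 0} + Nat.card W = Nat.card U + q * Nat.card π := by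
  classical
  have hcoset : ∀ v : σ → F, Nat.card {x : π // v + x.1 ∈ U ∧ eval (v + x.1) f = 0} =
      if v ∈ U then cosetZeros f π v else 0 := by
    intro v
    have hmem : ∀ x : π, v + x.1 ∈ U ↔ v ∈ U := fun x => U.add_mem_iff_left (hWU (h.le x.2))
    split_ifs with hv <;> simp [hmem, hv, cosetZeros]
  have hpoint : ∀ v : σ → F,
      q * (if v ∈ U then cosetZeros f π v else 0) + (if v ∈ W then Nat.card π else 0) =
        (if v ∈ U then Nat.card π else 0) + if v ∈ π then q * Nat.card π else 0 := by
    intro v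
    by_cases hvπ : v ∈ π
    · simp [hvπ, h.le hvπ, hWU (h.le hvπ), h.cosetZeros_of_mem hvπ, add_comm]
    by_cases hvW : v ∈ W
    · simp [hvπ, hvW, hWU hvW, h.cosetZeros_of_mem_of_notMem hvW hvπ]
    · simp [hvπ, hvW, h.mul_cosetZeros_eq hvW]
  have hsum := Finset.sum_congr (rfl : (Finset.univ : Finset (σ → F)) = _) fun v _ => hpoint v
  have hcosets := sum_card_translate (fun x : π => (x : σ → F)) fun v => v ∈ U ∧ eval v f = 0
  simp only [Finset.sum_add_distrib, ← Finset.mul_sum, ← hcoset, hcosets,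
    sum_ite_mem_submodule] at hsum
  refine Nat.eq_of_mul_eq_mul_left (Nat.card_pos (α := π)) ?_
  linear_combination hsum

end IsLinearSection

end LinearSection

section ParallelLines

variable {F : Type*} [Field F] [Fintype F] {k : ℕ} {P : F → F → Prop}
  [∀ s t, Decidable (P s t)]

theorem card_meet_le_one [DecidableEq F] {x y : F × F} (hxy : x ≠ y) :
    (Finset.univ.filter fun t => x.2 + x.1 * t = y.2 + y.1 * t).card ≤ 1 := by
  refine Finset.card_le_one.mpr fun t ht t' ht' => ?_
  simp only [Finset.mem_filter, Finset.mem_univ, true_and] at ht ht'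
  rcases mul_eq_zero.mp (show (x.1 - y.1) * (t - t') = 0 by linear_combination ht - ht')
    with hslope | ht
  · rw [sub_eq_zero.mp hslope] at ht
    exact absurd (Prod.ext (sub_eq_zero.mp hslope) (add_right_cancel ht)) hxy
  · exact sub_eq_zero.mp ht

theorem card_lines_le (hk : k * (k + 1) < 2 * Fintype.card F)
    (hcol : ∀ t, (Finset.univ.filter fun s => P s t).card ≤ k)
    {L : Finset (F × F)} (hL : ∀ l ∈ L, ∀ t, P (l.2 + l.1 * t) t) : L.card ≤ k := by
  classical
  by_contra! hlt
  obtain ⟨M, hML, hM⟩ := Finset.exists_subset_card_eq (Nat.succ_le_of_lt hlt)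
  have hmeet : ∀ t ∈ (Finset.univ : Finset F), 2 ≤ (Finset.bipartiteAbove
      (fun t (p : (F × F) × F × F) => p.1.2 + p.1.1 * t = p.2.2 + p.2.1 * t)
      M.offDiag t).card := by
    intro t _
    obtain ⟨x, hx, y, hy, hxy, heq⟩ := Finset.exists_ne_map_eq_of_card_lt_of_maps_to
      (s := M) (t := Finset.univ.filter fun s => P s t) (f := fun l => l.2 + l.1 * t)
      ((hcol t).trans_lt (hM ▸ k.lt_succ_self))
      fun l hl => by simpa using hL l (hML hl) t
    rw [← Finset.card_pair (a := (x, y)) (b := (y, x)) (by simp [hxy])]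
    refine Finset.card_le_card fun p hp => ?_
    rcases Finset.mem_insert.mp hp with rfl | hp
    · simp_all [Finset.bipartiteAbove]
    · simp_all [Finset.bipartiteAbove, eq_comm]
  have hmeet_once : ∀ p ∈ M.offDiag, (Finset.bipartiteBelow
      (fun t (p : (F × F) × F × F) => p.1.2 + p.1.1 * t = p.2.2 + p.2.1 * t)
      Finset.univ p).card ≤ 1 :=
    fun p hp => card_meet_le_one (Finset.mem_offDiag.mp hp).2.2
  have hcount := Finset.card_mul_le_card_mul _ hmeet hmeet_once
  rw [Finset.offDiag_card, hM, Finset.card_univ, mul_one, Nat.succ_mul, Nat.add_sub_cancel]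
    at hcount
  linarith

theorem card_lines_through {t₀ t : F} (ht : t ≠ t₀) (s₀ : F) :
    (Finset.univ.filter fun a => P (s₀ - a * t₀ + a * t) t).card =
      (Finset.univ.filter fun s => P s t).card := by
  have hne : t - t₀ ≠ 0 := sub_ne_zero.mpr ht
  refine Finset.card_bij' (fun a _ => s₀ - a * t₀ + a * t) (fun s _ => (s - s₀) / (t - t₀))
    (by simp) (fun s hs => ?_) (fun a _ => ?_) fun s _ => ?_
  · have hs' : s₀ - (s - s₀) / (t - t₀) * t₀ + (s - s₀) / (t - t₀) * t = s := by
      field_simp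
      ring
    simpa [hs'] using hs
  all_goals
    field_simp
    ring

theorem exists_line_through (hk : k < Fintype.card F)
    (hcol : ∀ t, (Finset.univ.filter fun s => P s t).card = k)
    (hline : ∀ a c, (∀ t, P (c + a * t) t) ∨
      (Finset.univ.filter fun t => P (c + a * t) t).card ≤ k) {s₀ t₀ : F} (h₀ : P s₀ t₀) :
    ∃ a c, c + a * t₀ = s₀ ∧ ∀ t, P (c + a * t) t := by
  classical
  by_contra! hno
  let line (a : F) : Finset F := {t | P (s₀ - a * t₀ + a * t) t}
  have hpencil : ∑ a : F, ((line a).erase t₀).card =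
      ∑ t ∈ Finset.univ.erase t₀, (Finset.univ.filter fun a => t ∈ line a).card := by
    simp only [Finset.card_filter]
    rw [Finset.sum_comm]
    refine Finset.sum_congr rfl fun a _ => ?_
    rw [← Finset.card_filter, Finset.filter_erase, Finset.filter_univ_mem]
  have hcolumn : ∀ t ∈ Finset.univ.erase t₀,
      (Finset.univ.filter fun a => t ∈ line a).card = k := by
    intro t ht
    simpa [line, hcol] using card_lines_through (P := P) (Finset.ne_of_mem_erase ht) s₀
  have hline_le : ∀ a ∈ (Finset.univ : Finset F), ((line a).erase t₀).card ≤ k - 1 := by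
    intro a _
    rw [Finset.card_erase_of_mem (by simpa [line] using h₀)]
    refine Nat.sub_le_sub_right ((hline a (s₀ - a * t₀)).resolve_left fun hall => ?_) 1
    obtain ⟨t, ht⟩ := hno a (s₀ - a * t₀) (by ring)
    exact ht (hall t)
  have hcount := hpencil ▸ Finset.sum_le_card_nsmul _ _ _ hline_le
  rw [Finset.sum_congr rfl hcolumn, Finset.sum_const, Finset.card_erase_of_mem (Finset.mem_univ _),
    Finset.card_univ, smul_eq_mul, smul_eq_mul] at hcount
  have hk₀ : 0 < k := by
    rw [← hcol t₀]
    exact Finset.card_pos.mpr ⟨s₀, by simpa using h₀⟩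
  obtain ⟨r, rfl⟩ : ∃ r, k = r + 1 := ⟨k - 1, by omega⟩
  obtain ⟨c, hc⟩ : ∃ c, Fintype.card F = c + 1 := ⟨Fintype.card F - 1, by omega⟩
  rw [hc, Nat.add_sub_cancel, Nat.add_sub_cancel] at hcount
  nlinarith

theorem exists_slope_of_card_column_eq (hk₀ : 0 < k) (hk : k * (k + 1) < 2 * Fintype.card F)
    (hcol : ∀ t, (Finset.univ.filter fun s => P s t).card = k)
    (hline : ∀ a c, (∀ t, P (c + a * t) t) ∨
      (Finset.univ.filter fun t => P (c + a * t) t).card ≤ k) :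
    ∃ a, ∀ s t, P s t → ∀ t', P (s + a * (t' - t)) t' := by
  classical
  have hthrough {s t : F} (hst : P s t) : ∃ a c, c + a * t = s ∧ ∀ t, P (c + a * t) t :=
    exists_line_through (by nlinarith) hcol hline hst
  let L : Finset (F × F) := {l | ∀ t, P (l.2 + l.1 * t) t}
  have mem_L : ∀ l, l ∈ L ↔ ∀ t, P (l.2 + l.1 * t) t := by simp [L]
  have hL : L.card ≤ k := card_lines_le hk (fun t => (hcol t).le) fun l hl => (mem_L l).mp hl
  have hdisjoint : ∀ t, Set.InjOn (fun l : F × F => l.2 + l.1 * t) L := by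
    intro t
    refine Finset.injOn_of_surjOn_of_card_le (t := Finset.univ.filter fun s => P s t) _
      (fun l hl => by simpa using (mem_L l).mp hl t) (fun s hs => ?_) (hL.trans (hcol t).ge)
    obtain ⟨a, c, hs', hac⟩ := hthrough (s := s) (t := t) (by simpa using hs)
    exact ⟨(a, c), (mem_L _).mpr hac, hs'⟩
  have hslope : ∀ l ∈ L, ∀ l' ∈ L, l.1 = l'.1 := by
    intro l hl l' hl'
    by_contra hne
    have hne' : l.1 - l'.1 ≠ 0 := sub_ne_zero.mpr hne
    refine hne (congrArg Prod.fst (hdisjoint ((l'.2 - l.2) / (l.1 - l'.1)) hl hl' ?_))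
    field_simp
    ring
  obtain ⟨s₁, hs₁⟩ := Finset.card_pos.mp (hk₀.trans_eq (hcol 0).symm)
  obtain ⟨a, c₁, -, hac₁⟩ := hthrough (Finset.mem_filter.mp hs₁).2
  refine ⟨a, fun s t hst t' => ?_⟩
  obtain ⟨a', c, rfl, hac⟩ := hthrough hst
  obtain rfl : a' = a := hslope (a', c) ((mem_L _).mpr hac) (a, c₁) ((mem_L _).mpr hac₁)
  convert hac t' using 1
  ring

end ParallelLines

section Polynomial

variable {F : Type*} [Field F]

theorem isCoprime_of_natDegree_eq_one {p r : F[X]} (hp : p.natDegree = 1)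
    (h : ∃ t, p.eval t = 0 ∧ r.eval t ≠ 0) : IsCoprime p r := by
  obtain ⟨t, hpt, hrt⟩ := h
  have hirr := Polynomial.irreducible_of_degree_eq_one
    ((Polynomial.degree_eq_iff_natDegree_eq_of_pos one_pos).mpr hp)
  refine hirr.coprime_iff_not_dvd.mpr fun ⟨s, hs⟩ => hrt ?_
  rw [hs, Polynomial.eval_mul, hpt, zero_mul]

theorem exists_eq_C_mul_pow {ι : Type*} {P β : ι → F[X]} {m : ℕ} {i j : ι}
    (hi : (β i).natDegree = 1) (hij : IsCoprime (β i) (β j)) (hP : (P i).natDegree ≤ m)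
    (hcross : ∀ i j, P i * β j ^ m = P j * β i ^ m) :
    ∃ c : F, ∀ j, P j = Polynomial.C c * β j ^ m := by
  have hβ : β i ^ m ≠ 0 := pow_ne_zero m fun h0 => by simp [h0] at hi
  obtain ⟨r, hr⟩ : β i ^ m ∣ P i :=
    hij.pow.dvd_of_dvd_mul_right ⟨P j, (hcross i j).trans (mul_comm _ _)⟩
  have hr_const : r.natDegree = 0 := by
    rcases eq_or_ne r 0 with rfl | hr0
    · exact Polynomial.natDegree_zero
    · rw [hr, Polynomial.natDegree_mul hβ hr0, Polynomial.natDegree_pow, hi] at hP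
      omega
  refine ⟨r.coeff 0, fun j => mul_right_cancel₀ hβ ?_⟩
  rw [← Polynomial.eq_C_of_natDegree_eq_zero hr_const, hcross j i, hr]
  ring

end Polynomial

theorem add_smul_notMem {F V : Type*} [Field F] [AddCommGroup V] [Module F V]
    {W : Submodule F V} {u w : V} (hu : u ∉ W) (hw : w ∉ W ⊔ F ∙ u) (s : F) : u + s • w ∉ W := by
  intro hmem
  rcases eq_or_ne s 0 with rfl | hs
  · exact hu (by simpa using hmem)
  · refine hw ((Submodule.smul_mem_iff _ hs).mp ?_)
    rw [← add_sub_cancel_left u (s • w)]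
    exact sub_mem (Submodule.mem_sup_left hmem)
      (Submodule.mem_sup_right (Submodule.mem_span_singleton_self u))

section Line

variable {F σ : Type*} [Field F] [Fintype σ] {f : MvPolynomial σ F} {u w d : σ → F}

/-- The linear polynomial `s ↦ tangentForm f d (u + s • w)`: the last coefficient of the pencils in
the direction `d` as their base point moves along a line. -/
noncomputable def tangentLine (f : MvPolynomial σ F) (u w d : σ → F) : F[X] :=
  Polynomial.C (tangentForm f d w) * Polynomial.X + Polynomial.C (tangentForm f d u)

theorem eval_tangentLine (s : F) :
    (tangentLine f u w d).eval s = tangentForm f d (u + s • w) := by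
  simp only [tangentLine, Polynomial.eval_add, Polynomial.eval_mul, Polynomial.eval_C,
    Polynomial.eval_X, map_add, map_smul, smul_eq_mul]
  ring

/-- The polynomial `s ↦ (pencil f (u + s • w) d).coeff k`: the `k`-th coefficient of the pencils in
the direction `d` as their base point moves along a line, as a polynomial. -/
noncomputable def pencilCoeffLine (f : MvPolynomial σ F) (u w : σ → F) (k : ℕ) (d : σ → F) :
    F[X] :=
  (pencil f (fun i => Polynomial.C (u i) + Polynomial.C (w i) * Polynomial.X)
    (fun i => Polynomial.C (d i))).coeff k

end Line

namespace IsLinearSection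

variable {F σ : Type*} [Field F] [Fintype F] [Fintype σ] {f : MvPolynomial σ F} {q k : ℕ}
  {W π : Submodule F (σ → F)} {u w d d' : σ → F}

theorem pencil_eq_of_forall_eval_eq_zero (h : IsLinearSection q f W π) (hu : u ∉ W) (hd : d ∈ π)
    (hdu : tangentForm f d u ≠ 0) {x y : σ → F} (hx : x ∈ π) (hy : y ∈ π)
    (hxy : ∀ t : F, eval (u + x + t • d) f = 0 → eval (u + y + t • d) f = 0) :
    pencil f (u + x) d = pencil f (u + y) d := by
  classical
  refine Polynomial.eq_of_degree_sub_lt_of_eval_finset_eq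
    {t : F | eval (u + x + t • d) f = 0} ?_ fun t ht => ?_
  · rw [← Fintype.card_subtype, ← Nat.card_eq_fintype_card, h.card_line_eq hu hd hdu hx,
      Polynomial.degree_lt_iff_coeff_zero]
    intro m hm
    rcases hm.eq_or_lt with rfl | hm
    · rw [Polynomial.coeff_sub, coeff_pencil_eq_tangentForm h.homogeneous,
        coeff_pencil_eq_tangentForm h.homogeneous, h.tangentForm_add hd u ⟨x, hx⟩,
        h.tangentForm_add hd u ⟨y, hy⟩, sub_self]
    · exact Polynomial.coeff_eq_zero_of_natDegree_lt <| (Polynomial.natDegree_sub_le_of_le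
        (h.natDegree_pencil_le _ hd) (h.natDegree_pencil_le _ hd)).trans_lt (by rwa [max_self])
  · have ht := (Finset.mem_filter.mp ht).2
    rw [eval_pencil_self, eval_pencil_self, ht, hxy t ht]

/-- The zeros of `f` in the plane `u + ⟨d, d'⟩` form `q` parallel lines, whose slope is `-c`. -/
theorem exists_eval_add_smul_eq (h : IsLinearSection q f W π) (hu : u ∉ W) (hd : d ∈ π)
    (hd' : d' ∈ π) (hdu : tangentForm f d' u ≠ 0) :
    ∃ c : F, ∀ t : F, eval (u + t • d) f = eval (u + (c * t) • d') f := by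
  classical
  obtain ⟨a, ha⟩ := exists_slope_of_card_column_eq (F := F) (k := q)
    (P := fun s t => eval (u + t • d + s • d') f = 0) (by linarith [h.two_lt])
    (by rw [h.card_eq]; nlinarith [h.two_lt])
    (fun t => by
      rw [← Fintype.card_subtype, ← Nat.card_eq_fintype_card,
        h.card_line_eq hu hd' hdu (π.smul_mem t hd)])
    (fun a c => by
      have hline : ∀ t, eval (u + t • d + (c + a * t) • d') f =
          (pencil f (u + c • d') (d + a • d')).eval t := fun t => by
        rw [eval_pencil_self]
        exact congrArg (eval · f) (by module)
      simp only [hline]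
      refine or_iff_not_imp_left.mpr fun hne => ?_
      rw [← Fintype.card_subtype, ← Nat.card_eq_fintype_card]
      exact (card_eval_eq_zero_le fun h0 => hne fun t => by rw [h0, Polynomial.eval_zero]).trans
        (h.natDegree_pencil_le _ (π.add_mem hd (π.smul_mem a hd'))))
  refine ⟨-a, fun t => ?_⟩
  have hpencil := h.pencil_eq_of_forall_eval_eq_zero hu hd' hdu (π.smul_mem t hd)
    (π.smul_mem (-a * t) hd') fun s hs => by
      have hs' := ha s t hs 0
      rw [zero_smul, add_zero] at hs'
      exact (congrArg (eval · f) (by module)).trans hs'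
  simpa only [eval_pencil_self, zero_smul, add_zero] using congrArg (Polynomial.eval 0) hpencil

theorem exists_coeff_pencil_eq (h : IsLinearSection q f W π) (hu : u ∉ W) (hd : d ∈ π)
    (hd' : d' ∈ π) (hdu : tangentForm f d' u ≠ 0) :
    ∃ c : F, ∀ k, (pencil f u d).coeff k = (pencil f u d').coeff k * c ^ k := by
  obtain ⟨c, hc⟩ := h.exists_eval_add_smul_eq hu hd hd' hdu
  suffices hpencil : pencil f u d = (pencil f u d').comp (Polynomial.C c * Polynomial.X) from
    ⟨c, fun k => by rw [hpencil, Polynomial.comp_C_mul_X_coeff]⟩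
  refine sub_eq_zero.mp (eq_zero_of_natDegree_lt_card (lt_of_le_of_lt ?_ h.lt_card) fun t => ?_)
  · refine Polynomial.natDegree_sub_le_of_le (h.natDegree_pencil_le u hd) ?_ |>.trans_eq
      (max_self q)
    refine Polynomial.natDegree_comp_le.trans ((Nat.mul_le_mul (h.natDegree_pencil_le u hd')
      ((Polynomial.natDegree_C_mul_le c _).trans Polynomial.natDegree_X_le)).trans_eq (mul_one q))
  · simp [eval_pencil_self, hc t]

theorem coeff_pencil_mul_tangentForm_pow (h : IsLinearSection q f W π) (hu : u ∉ W) (hk : 0 < k)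
    (hd : d ∈ π) (hd' : d' ∈ π) :
    (pencil f u d).coeff k * tangentForm f d' u ^ (q * k) =
      (pencil f u d').coeff k * tangentForm f d u ^ (q * k) := by
  have key : ∀ {d d' : σ → F}, d ∈ π → d' ∈ π → tangentForm f d' u ≠ 0 →
      (pencil f u d).coeff k * tangentForm f d' u ^ (q * k) =
        (pencil f u d').coeff k * tangentForm f d u ^ (q * k) := by
    intro d d' hd hd' hdu
    obtain ⟨c, hc⟩ := h.exists_coeff_pencil_eq hu hd hd' hdu
    have htangent := hc q
    rw [coeff_pencil_eq_tangentForm h.homogeneous, coeff_pencil_eq_tangentForm h.homogeneous]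
      at htangent
    rw [hc k, htangent, pow_mul (_ * _), mul_pow, pow_pow_of_card_eq_sq h.card_eq, mul_pow,
      ← pow_mul]
    ring
  by_cases hd'u : tangentForm f d' u = 0
  · by_cases hdu : tangentForm f d u = 0
    · have hqk : q * k ≠ 0 := mul_ne_zero (by linarith [h.two_lt]) hk.ne'
      rw [hd'u, hdu, zero_pow hqk, mul_zero, mul_zero]
    · exact (key hd' hd hdu).symm
  · exact key hd hd' hd'u

theorem pencilCoeffLine_mul_tangentLine_pow (h : IsLinearSection q f W π) (hu : u ∉ W)
    (hw : w ∉ W ⊔ F ∙ u) (hk : 0 < k) (hkq : k < q) (hd : d ∈ π) (hd' : d' ∈ π) :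
    pencilCoeffLine f u w k d * tangentLine f u w d' ^ (q * k) =
      pencilCoeffLine f u w k d' * tangentLine f u w d ^ (q * k) := by
  have hdegree : ∀ d d', (pencilCoeffLine f u w k d *
      tangentLine f u w d' ^ (q * k)).natDegree ≤ q + 1 - k + q * k := fun d d' =>
    Polynomial.natDegree_mul_le_of_le (natDegree_coeff_pencil_le h.homogeneous u w d k) <|
      Polynomial.natDegree_pow_le_of_le _ Polynomial.natDegree_linear_le |>.trans_eq (mul_one _)
  refine sub_eq_zero.mp (eq_zero_of_natDegree_lt_card (lt_of_le_of_lt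
    (Polynomial.natDegree_sub_le_of_le (hdegree d d') (hdegree d' d)) ?_) fun s => ?_)
  · obtain ⟨m, rfl⟩ := Nat.exists_eq_add_of_lt hkq
    rw [max_self, h.card_eq, show k + m + 1 + 1 - k = m + 2 by omega]
    nlinarith [h.two_lt]
  · simp only [pencilCoeffLine, Polynomial.eval_sub, Polynomial.eval_mul, Polynomial.eval_pow,
      eval_tangentLine, eval_coeff_pencil, sub_eq_zero]
    exact h.coeff_pencil_mul_tangentForm_pow (add_smul_notMem hu hw s) hk hd hd'

theorem exists_coeff_pencil_add_smul_eq (h : IsLinearSection q f W π) (hu : u ∉ W)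
    (hw : w ∉ W ⊔ F ∙ u) (hk : 0 < k) (hkq : k < q) :
    ∃ e : F, (k ≠ 1 → e = 0) ∧ ∀ d ∈ π, ∀ s : F,
      (pencil f (u + s • w) d).coeff k = e * tangentForm f d (u + s • w) ^ (q * k) := by
  obtain ⟨d₁, hd₁, hd₁w⟩ := h.exists_tangentForm_ne_zero fun hW => hw (Submodule.mem_sup_left hW)
  set s₁ := -tangentForm f d₁ u / tangentForm f d₁ w
  obtain ⟨d₂, hd₂, hd₂u⟩ := h.exists_tangentForm_ne_zero (add_smul_notMem hu hw s₁)
  have hnatDegree : (tangentLine f u w d₁).natDegree = 1 := Polynomial.natDegree_linear hd₁w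
  have hdegree : (pencilCoeffLine f u w k d₁).natDegree ≤ q + 1 - k :=
    natDegree_coeff_pencil_le h.homogeneous u w d₁ k
  have hcoprime : IsCoprime (tangentLine f u w d₁) (tangentLine f u w d₂) :=
    isCoprime_of_natDegree_eq_one hnatDegree ⟨s₁, by
      rw [eval_tangentLine, map_add, map_smul, smul_eq_mul, div_mul_cancel₀ _ hd₁w,
        add_neg_cancel], by rwa [eval_tangentLine]⟩
  have hdegree_le : q + 1 - k ≤ q * k := by
    have := Nat.le_mul_of_pos_right q hk
    omega
  obtain ⟨e, he⟩ := exists_eq_C_mul_pow (P := fun d : π => pencilCoeffLine f u w k d)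
    (β := fun d : π => tangentLine f u w d) (m := q * k) (i := ⟨d₁, hd₁⟩) (j := ⟨d₂, hd₂⟩)
    hnatDegree hcoprime (hdegree.trans hdegree_le)
    fun d d' => h.pencilCoeffLine_mul_tangentLine_pow hu hw hk hkq d.2 d'.2
  refine ⟨e, fun hk1 => ?_, fun d hd s => ?_⟩
  · by_contra he0
    rw [he ⟨d₁, hd₁⟩, Polynomial.natDegree_C_mul he0, Polynomial.natDegree_pow, hnatDegree,
      mul_one] at hdegree
    have : q * 2 ≤ q * k := Nat.mul_le_mul_left q (by omega)
    omega
  · rw [← eval_coeff_pencil, ← eval_tangentLine, ← pencilCoeffLine, he ⟨d, hd⟩]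
    simp

theorem exists_notMem_sup_span (h : IsLinearSection q f W π) (u : σ → F) :
    ∃ w, w ∉ W ⊔ F ∙ u := by
  by_contra! hall
  have htop : W ⊔ F ∙ u = ⊤ := Submodule.eq_top_iff'.mpr hall
  have hsup := Submodule.finrank_add_le_finrank_add_finrank W (F ∙ u)
  rw [htop, finrank_top, finrank_fintype_fun_eq_card] at hsup
  have hspan := finrank_span_le_card (R := F) ({u} : Set (σ → F))
  rw [Set.toFinset_singleton, Finset.card_singleton] at hspan
  have := h.finrank_add_two_le
  omega

theorem exists_notMem (h : IsLinearSection q f W π) : ∃ u, u ∉ W := by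
  obtain ⟨u, hu⟩ := h.exists_notMem_sup_span 0
  exact ⟨u, fun hmem => hu (Submodule.mem_sup_left hmem)⟩

theorem coeff_pencil_eq_zero (h : IsLinearSection q f W π) (hu : u ∉ W) (hd : d ∈ π)
    (hk : 1 < k) (hkq : k < q) : (pencil f u d).coeff k = 0 := by
  obtain ⟨w, hw⟩ := h.exists_notMem_sup_span u
  obtain ⟨e, he, hcoeff⟩ := h.exists_coeff_pencil_add_smul_eq hu hw (by omega) hkq
  simpa [he hk.ne'] using hcoeff d hd 0

theorem exists_tangentForm_eq_and (h : IsLinearSection q f W π) (hu : u ∉ W)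
    (hw : w ∉ W ⊔ F ∙ u) :
    ∃ e : F, (∀ d ∈ π, tangentForm f u d = e * tangentForm f d u ^ q) ∧
      ∀ d ∈ π, tangentForm f w d = e * tangentForm f d w ^ q := by
  have hwu : w - u ∉ W ⊔ F ∙ u := fun hmem => hw <| by
    simpa using add_mem hmem (Submodule.mem_sup_right (Submodule.mem_span_singleton_self u))
  obtain ⟨e, -, he⟩ := h.exists_coeff_pencil_add_smul_eq hu hwu one_pos (by linarith [h.two_lt])
  simp only [coeff_one_pencil, mul_one] at he
  exact ⟨e, fun d hd => by simpa using he d hd 0, fun d hd => by simpa using he d hd 1⟩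

theorem eq_of_forall_tangentForm_eq (h : IsLinearSection q f W π) (hu : u ∉ W) {e e' : F}
    (he : ∀ d ∈ π, tangentForm f u d = e * tangentForm f d u ^ q)
    (he' : ∀ d ∈ π, tangentForm f u d = e' * tangentForm f d u ^ q) : e = e' := by
  obtain ⟨d, hd, hdu⟩ := h.exists_tangentForm_ne_zero hu
  exact mul_right_cancel₀ (pow_ne_zero q hdu) ((he d hd).symm.trans (he' d hd))

theorem exists_tangentForm_eq (h : IsLinearSection q f W π) :
    ∃ e : F, ∀ u ∉ W, ∀ d ∈ π, tangentForm f u d = e * tangentForm f d u ^ q := by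
  obtain ⟨u₀, hu₀⟩ := h.exists_notMem
  obtain ⟨w₀, hw₀⟩ := h.exists_notMem_sup_span u₀
  obtain ⟨e, heu₀, hew₀⟩ := h.exists_tangentForm_eq_and hu₀ hw₀
  refine ⟨e, fun u hu => ?_⟩
  by_cases hmem : u ∈ W ⊔ F ∙ u₀
  · have hle : W ⊔ F ∙ u ≤ W ⊔ F ∙ u₀ :=
      sup_le le_sup_left ((Submodule.span_singleton_le_iff_mem _ _).mpr hmem)
    obtain ⟨e', heu, hew₀'⟩ := h.exists_tangentForm_eq_and hu fun hmem' => hw₀ (hle hmem')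
    rwa [h.eq_of_forall_tangentForm_eq (fun hW => hw₀ (Submodule.mem_sup_left hW)) hew₀ hew₀']
  · obtain ⟨e', heu₀', heu⟩ := h.exists_tangentForm_eq_and hu₀ hmem
    rwa [h.eq_of_forall_tangentForm_eq hu₀ heu₀ heu₀']

theorem eval_add_smul (h : IsLinearSection q f W π) (hu : u ∉ W) (hd : d ∈ π) (t : F) :
    eval (u + t • d) f =
      eval u f + tangentForm f u d * t + tangentForm f d u * t ^ q := by
  have hq := h.two_lt
  rw [← eval_pencil_self, Polynomial.eval_eq_sum_range' (Nat.lt_succ_of_le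
    (h.natDegree_pencil_le u hd)), Finset.sum_range_succ,
    ← Finset.sum_range_add_sum_Ico _ (show 2 ≤ q by omega),
    Finset.sum_eq_zero (s := Finset.Ico 2 q) fun k hk => ?_]
  · simp [Finset.sum_range_succ, coeff_zero_pencil, aeval_eq_eval, coeff_one_pencil,
      coeff_pencil_eq_tangentForm h.homogeneous]
  · rw [Finset.mem_Ico] at hk
    rw [h.coeff_pencil_eq_zero hu hd (by omega) hk.2, zero_mul]

end IsLinearSection

namespace IsHermitianForm

section Orthogonal

variable {F V : Type} [Field F] [AddCommGroup V] [Module F V] {q : ℕ} {η : V → V → F}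

/-- The linear functional `v ↦ η v w` given by a Hermitian form `η`. -/
def toLinearMap (hη : IsHermitianForm q η) (w : V) : V →ₗ[F] F where
  toFun v := η v w
  map_add' u v := hη.1 u v w
  map_smul' a v := hη.2.2.1 a v w

theorem toLinearMap_apply (hη : IsHermitianForm q η) (v w : V) : hη.toLinearMap w v = η v w := rfl

theorem apply_eq_zero (hη : IsHermitianForm q η) (hq : q ≠ 0) {v w : V} (h : η v w = 0) :
    η w v = 0 := by
  rw [hη.2.2.2 v, h, zero_pow hq]

theorem apply_smul (hη : IsHermitianForm q η) (a : F) (v w : V) : η v (a • w) = a ^ q * η v w := by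
  rw [hη.2.2.2 (a • w), hη.2.2.1, mul_pow, ← hη.2.2.2]

theorem apply_sum (hη : IsHermitianForm q η) {ι : Type*} (s : Finset ι) (v : V) (w : ι → V) :
    η v (∑ i ∈ s, w i) = ∑ i ∈ s, η v (w i) :=
  map_sum (AddMonoidHom.mk' (η v) (hη.2.1 v)) w s

/-- The subspace of the vectors orthogonal to `C` with respect to a Hermitian form. -/
def orthogonal (hη : IsHermitianForm q η) (C : Submodule F V) : Submodule F V :=
  ⨅ w : C, LinearMap.ker (hη.toLinearMap w)

theorem mem_orthogonal (hη : IsHermitianForm q η) {C : Submodule F V} {v : V} :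
    v ∈ hη.orthogonal C ↔ ∀ w ∈ C, η v w = 0 := by
  simp [orthogonal, toLinearMap_apply]

variable [Fintype F]

theorem exists_apply_add_smul_self_eq_zero (hη : IsHermitianForm q η) (hq : 1 < q)
    (hcard : Fintype.card F = q ^ 2) {x y : V} (hx : η x x = 0) (hxy : η x y ≠ 0) :
    ∃ t : F, η (y + t • x) (y + t • x) = 0 := by
  obtain ⟨z, hz⟩ := exists_add_pow_eq_of_pow_eq_self hq hcard (a := -η y y) <| by
    rw [← conj_apply hcard, map_neg, conj_apply, ← hη.2.2.2]
  refine ⟨z / η x y, ?_⟩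
  rw [hη.2.1, hη.1, hη.1, hη.apply_smul, hη.apply_smul, hη.2.2.1, hη.2.2.1, hx,
    div_mul_cancel₀ _ hxy, hη.2.2.2 x y, ← mul_pow, div_mul_cancel₀ _ hxy]
  linear_combination hz

variable [FiniteDimensional F V]

theorem finrank_inf_orthogonal_add (hη : IsHermitianForm q η) (hcard : Fintype.card F = q ^ 2)
    (π C : Submodule F V) (hC : ∀ y ∈ C, (∀ x ∈ π, η x y = 0) → y = 0) :
    finrank F ↥(π ⊓ hη.orthogonal C) + finrank F C = finrank F π := by
  let b := finBasis F C
  let φ : V →ₗ[F] Fin (finrank F C) → F := LinearMap.pi fun i => hη.toLinearMap (b i)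
  have hφ : ∀ x i, φ x i = η x (b i) := fun x i => rfl
  have hker : LinearMap.ker φ = hη.orthogonal C := by
    ext x
    rw [LinearMap.mem_ker, hη.mem_orthogonal]
    refine ⟨fun hx y hy => ?_, fun hx => funext fun i => hx _ (b i).2⟩
    have hsum := congrArg Subtype.val (b.sum_repr ⟨y, hy⟩)
    rw [← show _ = y from hsum, AddSubmonoidClass.coe_finsetSum, hη.apply_sum]
    refine Finset.sum_eq_zero fun i _ => ?_
    rw [Submodule.coe_smul, hη.apply_smul, ← hφ, hx, Pi.zero_apply, mul_zero]
  have hrange : LinearMap.range (φ.domRestrict π) = ⊤ := by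
    by_contra htop
    obtain ⟨g, hg0, hg⟩ := Submodule.exists_le_ker_of_lt_top _ (lt_top_iff_ne_top.mpr htop)
    let y : C := ∑ i, g (Pi.single i 1) ^ q • b i
    have hy : ∀ x ∈ π, η x y = 0 := by
      intro x hx
      have hgx : g (φ x) = 0 := hg ⟨⟨x, hx⟩, rfl⟩
      rw [LinearMap.pi_apply_eq_sum_univ] at hgx
      rw [← hgx, AddSubmonoidClass.coe_finsetSum, hη.apply_sum]
      refine Finset.sum_congr rfl fun i _ => ?_
      rw [Submodule.coe_smul, hη.apply_smul, pow_pow_of_card_eq_sq hcard, hφ, smul_eq_mul, mul_comm]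
      congr 2
      ext j
      simp [Pi.single_apply, eq_comm]
    have hy0 : y = 0 := Subtype.ext (hC y y.2 hy)
    have hcoeff := Fintype.linearIndependent_iff.mp b.linearIndependent _ hy0
    refine hg0 (LinearMap.pi_ext' fun i => LinearMap.ext_ring ?_)
    exact eq_zero_of_pow_eq_zero (hcoeff i)
  have hrank := (φ.domRestrict π).finrank_range_add_finrank_ker
  rwa [hrange, finrank_top, finrank_fin_fun, LinearMap.ker_domRestrict, hker, add_comm,
    ← Submodule.finrank_map_subtype_eq, Submodule.map_comap_subtype] at hrank

end Orthogonal

theorem hasRadicalDimOn {F : Type} [Field F] [Fintype F] {q n k : ℕ}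
    {η : (Fin n → F) → (Fin n → F) → F} (hη : IsHermitianForm q η)
    (hcard : Fintype.card F = q ^ 2) {π W U : Submodule F (Fin n → F)} (hπW : π ≤ W) (hWU : W ≤ U)
    (hperp : ∀ x ∈ π, ∀ y ∈ W, η x y = 0)
    (hsep : ∀ u ∈ U, (∀ x ∈ π, η x u = 0) → u ∈ W)
    (hiso : ∀ v ∈ W, η v v = 0 → v ∈ π)
    (hk : finrank F U + k = finrank F W + finrank F π) : HasRadicalDimOn η U k := by
  have hq : q ≠ 0 := by
    rintro rfl
    simp at hcard
  obtain ⟨C, hC⟩ := exists_isCompl W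
  have hsup : W ⊔ C ⊓ U = U := by rw [← sup_inf_assoc_of_le C hWU, hC.sup_eq_top, top_inf_eq]
  have hdisj : W ⊓ (C ⊓ U) = ⊥ := by rw [← inf_assoc, hC.inf_eq_bot, bot_inf_eq]
  have horth : π ⊓ hη.orthogonal (C ⊓ U) = π ⊓ hη.orthogonal U := by
    refine le_antisymm (fun x hx => ⟨hx.1, hη.mem_orthogonal.mpr fun u hu => ?_⟩)
      (inf_le_inf_left _ fun x hx => hη.mem_orthogonal.mpr fun y hy =>
        hη.mem_orthogonal.mp hx y hy.2)
    rw [← hsup] at hu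
    obtain ⟨w, hw, y, hy, rfl⟩ := Submodule.mem_sup.mp hu
    rw [hη.2.1, hperp x hx.1 w hw, hη.mem_orthogonal.mp hx.2 y hy, add_zero]
  refine ⟨π ⊓ hη.orthogonal U, inf_le_left.trans (hπW.trans hWU), ?_, fun v hv =>
    ⟨fun hvR => hη.mem_orthogonal.mp hvR.2, fun hvU => ⟨?_, hη.mem_orthogonal.mpr hvU⟩⟩⟩
  · have hrank := hη.finrank_inf_orthogonal_add hcard π (C ⊓ U) fun y hy hyπ =>
      (Submodule.mem_bot F).mp (hdisj ▸ ⟨hsep y hy.2 hyπ, hy⟩)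
    have hdim := Submodule.finrank_sup_add_finrank_inf_eq W (C ⊓ U)
    rw [hsup, hdisj, finrank_bot] at hdim
    rw [horth] at hrank
    omega
  · refine hiso v (hsep v hv fun x hx => ?_) (hvU v hv)
    exact hη.apply_eq_zero hq (hvU x (hWU (hπW hx)))

end IsHermitianForm

section Hermitian

variable {F σ : Type*} [Field F] [Fintype F] {f : MvPolynomial σ F} {q : ℕ} {l : F}

theorem mul_coeff_pencil_pow (hq : 2 < q) (hcard : Fintype.card F = q ^ 2)
    (hf : f.IsHomogeneous (q + 1)) {v w : σ → F}
    (hl : ∀ t : F, t ≠ 0 → (l * eval (v + t • w) f) ^ q = l * eval (v + t • w) f) {i : ℕ}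
    (hi : i ≤ 1) : (l * (pencil f v w).coeff i) ^ q = l * (pencil f v w).coeff (i * q) := by
  have hdeg : (Polynomial.C l * pencil f v w).natDegree ≤ q + 1 :=
    (Polynomial.natDegree_C_mul_le _ _).trans (natDegree_pencil_le hf v w)
  simpa only [Polynomial.coeff_C_mul] using coeff_pow_of_eval_pow hcard
    (hdeg.trans_lt (Nat.lt_sub_of_add_lt (by nlinarith)))
    (fun t ht => by
      simpa only [Polynomial.eval_mul, Polynomial.eval_C, eval_pencil_self] using hl t ht)
    (Nat.lt_sub_of_add_lt (by nlinarith))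

theorem tangentForm_self_of_card_eq_sq [Fintype σ] (hcard : Fintype.card F = q ^ 2)
    (hf : f.IsHomogeneous (q + 1)) (v : σ → F) : tangentForm f v v = eval v f := by
  rw [tangentForm_self hf, Nat.cast_succ, natCast_eq_zero_of_card_eq_sq hcard, zero_add, one_mul]

end Hermitian

theorem isHermitianForm_mul_tangentForm {F σ : Type} [Field F] [Fintype F] [Fintype σ]
    {f : MvPolynomial σ F} {q : ℕ} {l : F} (hq : 2 < q) (hcard : Fintype.card F = q ^ 2)
    (hf : f.IsHomogeneous (q + 1)) (hl : ∀ v, (l * eval v f) ^ q = l * eval v f) :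
    IsHermitianForm q fun v w => l * tangentForm f w v := by
  have hsymm : ∀ v w, l * tangentForm f v w = (l * tangentForm f w v) ^ q := by
    intro v w
    have hcoeff := mul_coeff_pencil_pow hq hcard hf (v := w) (w := v) (fun t _ => hl _) le_rfl
    rwa [one_mul, coeff_one_pencil, coeff_pencil_eq_tangentForm hf, eq_comm] at hcoeff
  have hadd : ∀ u v w,
      l * tangentForm f (v + w) u = l * tangentForm f v u + l * tangentForm f w u := fun u v w => by
    rw [hsymm, map_add, mul_add, add_pow_of_card_eq_sq hcard, ← hsymm, ← hsymm]
  refine ⟨fun u v w => ?_, hadd, fun a v w => ?_, hsymm⟩ <;> dsimp only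
  · rw [map_add, mul_add]
  · rw [map_smul, smul_eq_mul, mul_left_comm]

namespace IsLinearSection

variable {F σ : Type*} [Field F] [Fintype F] [Fintype σ] {f : MvPolynomial σ F} {q : ℕ}
  {W π : Submodule F (σ → F)} {u d : σ → F} {e : F}

theorem exists_pair_eval_add_smul_eq_zero (h : IsLinearSection q f W π) (hu : u ∉ W) (hd : d ∈ π)
    (hdu : tangentForm f d u ≠ 0) :
    ∃ s t : F, s ≠ t ∧ eval (u + s • d) f = 0 ∧ eval (u + t • d) f = 0 := by
  have hcard := h.card_line_eq hu hd hdu π.zero_mem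
  simp only [add_zero] at hcard
  have : Nontrivial {t : F // eval (u + t • d) f = 0} :=
    Finite.one_lt_card_iff_nontrivial.mp (by rw [hcard]; linarith [h.two_lt])
  obtain ⟨s, t, hst⟩ := exists_pair_ne {t : F // eval (u + t • d) f = 0}
  exact ⟨s, t, fun heq => hst (Subtype.ext heq), s.2, t.2⟩

theorem pow_add_one_eq_one (h : IsLinearSection q f W π)
    (he : ∀ u ∉ W, ∀ d ∈ π, tangentForm f u d = e * tangentForm f d u ^ q) : e ^ (q + 1) = 1 := by
  obtain ⟨u, hu⟩ := h.exists_notMem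
  obtain ⟨d, hd, hdu⟩ := h.exists_tangentForm_ne_zero hu
  obtain ⟨s, t, hst, hs, ht⟩ := h.exists_pair_eval_add_smul_eq_zero hu hd hdu
  rw [h.eval_add_smul hu hd, he u hu d hd] at hs ht
  set B := tangentForm f d u
  have hpow : ∀ a b : F, (a - b) ^ q = a ^ q - b ^ q := by
    simpa only [conj_apply] using map_sub (conj h.card_eq)
  refine pow_add_one_eq_one_of_mul_pow_eq_neg h.card_eq (x := B * (s - t) ^ q)
    (mul_ne_zero hdu (pow_ne_zero q (sub_ne_zero.mpr hst))) ?_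
  rw [mul_pow, pow_pow_of_card_eq_sq h.card_eq, hpow]
  linear_combination hs - ht

theorem exists_mul_eval_pow_eq (h : IsLinearSection q f W π) :
    ∃ l : F, l ≠ 0 ∧ ∀ v, (l * eval v f) ^ q = l * eval v f := by
  have hq := h.two_lt
  obtain ⟨e, he⟩ := h.exists_tangentForm_eq
  obtain ⟨l, hl0, hl⟩ :=
    exists_pow_eq_mul_of_norm_eq_one (by omega) h.card_eq (h.pow_add_one_eq_one he)
  have hnotMem : ∀ u ∉ W, (l * eval u f) ^ q = l * eval u f := by
    intro u hu
    obtain ⟨d, hd, hdu⟩ := h.exists_tangentForm_ne_zero hu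
    obtain ⟨t, -, -, ht, -⟩ := h.exists_pair_eval_add_smul_eq_zero hu hd hdu
    rw [h.eval_add_smul hu hd, he u hu d hd] at ht
    set m := l * tangentForm f d u * t ^ q with hm
    have hmq : m ^ q = l * e * tangentForm f d u ^ q * t := by
      rw [hm, mul_pow, mul_pow, hl, pow_pow_of_card_eq_sq h.card_eq]
    have htrace : l * eval u f = -(m ^ q + m) := by
      rw [hmq, hm]
      linear_combination l * ht
    rw [htrace, ← conj_apply h.card_eq, map_neg, map_add, conj_apply, conj_apply,
      pow_pow_of_card_eq_sq h.card_eq, add_comm]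
  refine ⟨l, hl0, fun v => ?_⟩
  by_cases hv : v ∈ W
  · obtain ⟨u, hu⟩ := h.exists_notMem
    have hcoeff := mul_coeff_pencil_pow hq h.card_eq h.homogeneous (v := v) (w := u)
      (fun t ht => hnotMem (v + t • u) fun hmem => hu <|
        (W.smul_mem_iff ht).mp ((W.add_mem_iff_right hv).mp hmem)) zero_le_one
    rwa [zero_mul, coeff_zero_pencil, aeval_eq_eval] at hcoeff
  · exact hnotMem v hv

end IsLinearSection

namespace IsLinearSection

variable {F : Type} [Field F] [Fintype F] {q n k : ℕ} {f : MvPolynomial (Fin n) F}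
  {W π U : Submodule F (Fin n → F)} {l : F}

theorem tangentForm_eq_zero_of_mem (h : IsLinearSection q f W π) (hl0 : l ≠ 0)
    (hl : ∀ v, (l * eval v f) ^ q = l * eval v f) {x y : Fin n → F} (hx : x ∈ π) (hy : y ∈ W) :
    tangentForm f y x = 0 := by
  have hη := isHermitianForm_mul_tangentForm h.two_lt h.card_eq h.homogeneous hl
  have hself := tangentForm_self_of_card_eq_sq h.card_eq h.homogeneous
  by_contra hxy
  obtain ⟨t, ht⟩ := hη.exists_apply_add_smul_self_eq_zero (by linarith [h.two_lt]) h.card_eq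
    (x := x) (y := y) (by rw [hself, h.eval_eq_zero hx, mul_zero]) (mul_ne_zero hl0 hxy)
  rw [hself] at ht
  have hmem := (h.eval_eq_zero_iff _ (W.add_mem hy (W.smul_mem t (h.le hx)))).mp
    ((mul_eq_zero.mp ht).resolve_left hl0)
  exact hxy (h.tangentForm_eq_zero ((π.add_mem_iff_left (π.smul_mem t hx)).mp hmem) hx)

theorem isHermitianConeOn (h : IsLinearSection q f W π) (hWU : W ≤ U)
    (hk : finrank F U + k = finrank F W + finrank F π) :
    IsHermitianConeOn q U k (hypersurfacePts f ∩ projPts U) := by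
  obtain ⟨l, hl0, hl⟩ := h.exists_mul_eval_pow_eq
  have hη := isHermitianForm_mul_tangentForm h.two_lt h.card_eq h.homogeneous hl
  have hself : ∀ v, l * tangentForm f v v = 0 ↔ eval v f = 0 := fun v => by
    rw [tangentForm_self_of_card_eq_sq h.card_eq h.homogeneous, mul_eq_zero, or_iff_right hl0]
  refine ⟨_, hη, hη.hasRadicalDimOn h.card_eq h.le hWU (fun x hx y hy => ?_)
    (fun u _ hu => ?_) (fun v hv hvv => ?_) hk, ?_⟩
  · rw [h.tangentForm_eq_zero_of_mem hl0 hl hx hy, mul_zero]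
  · by_contra huW
    obtain ⟨d, hd, hdu⟩ := h.exists_tangentForm_ne_zero huW
    exact mul_ne_zero hl0 hdu (hη.apply_eq_zero (by linarith [h.two_lt]) (hu d hd))
  · exact (h.eval_eq_zero_iff v hv).mp ((hself v).mp hvv)
  · ext P
    simp only [hself, hypersurfacePts, projPts, Set.mem_inter_iff, Set.mem_ofPred_eq, and_comm]

end IsLinearSection

section ProjectiveCount

theorem ncard_eq_ncard_rep_mem_mul {K V : Type*} [DivisionRing K] [AddCommGroup V] [Module K V]
    [Finite V] {A : Set V} (h0 : (0 : V) ∈ A) (hsmul : ∀ c : K, ∀ v ∈ A, c • v ∈ A) :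
    A.ncard = {P : Projectivization K V | P.rep ∈ A}.ncard * (Nat.card K - 1) + 1 := by
  let φ : {P : Projectivization K V | P.rep ∈ A} × Kˣ → ↑(A \ {0}) := fun p =>
    ⟨p.2 • p.1.1.rep, hsmul _ _ p.1.2, smul_ne_zero p.2.ne_zero p.1.1.rep_nonzero⟩
  have hφ : Function.Bijective φ := by
    refine ⟨fun p p' hpp' => ?_, fun v => ?_⟩
    · have hrep : p.2 • p.1.1.rep = p'.2 • p'.1.1.rep := congrArg Subtype.val hpp'
      have hP : p.1 = p'.1 := by
        ext
        rw [← p.1.1.mk_rep, ← p'.1.1.mk_rep, Projectivization.mk_eq_mk_iff]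
        exact ⟨p.2⁻¹ * p'.2, by rw [mul_smul, ← hrep, inv_smul_smul]⟩
      rw [hP] at hrep
      exact Prod.ext hP (Units.ext (smul_left_injective K p'.1.1.rep_nonzero hrep))
    · obtain ⟨a, ha⟩ := Projectivization.exists_smul_eq_mk_rep K v.1 v.2.2
      exact ⟨(⟨Projectivization.mk K v.1 v.2.2, by
        rw [Set.mem_ofPred_eq, ← ha]; exact hsmul a _ v.2.1⟩, a⁻¹), Subtype.ext (by
          simp only [φ, ← ha, inv_smul_smul])⟩
  rw [← Set.ncard_sdiff_singleton_add_one h0, ← Nat.card_coe_set_eq (A \ {0}),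
    ← Nat.card_eq_of_bijective φ hφ, Nat.card_prod, Nat.card_units, Nat.card_coe_set_eq]

theorem mem_projPts_iff {F : Type} [Field F] {n : ℕ} {U : Submodule F (Fin n → F)}
    {P : Projectivization F (Fin n → F)} : P ∈ projPts U ↔ P.rep ∈ U := by
  rw [projPts, Set.mem_ofPred_eq, Projectivization.submodule_eq,
    Submodule.span_singleton_le_iff_mem]

theorem exists_eval_ne_zero_of_not_projPts_subset {F : Type} [Field F] {n : ℕ}
    {f : MvPolynomial (Fin n) F} {U : Submodule F (Fin n → F)}
    (hU : ¬ projPts U ⊆ hypersurfacePts f) : ∃ v ∈ U, eval v f ≠ 0 := by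
  obtain ⟨P, hPU, hPf⟩ := Set.not_subset.mp hU
  exact ⟨P.rep, mem_projPts_iff.mp hPU, hPf⟩

theorem card_zeros_mem_eq {F : Type} [Field F] [Fintype F] {q n : ℕ}
    (hcard : Fintype.card F = q ^ 2) {f : MvPolynomial (Fin n) F} (hf : f.IsHomogeneous (q + 1))
    (U : Submodule F (Fin n → F)) :
    Nat.card {v // v ∈ U ∧ eval v f = 0} =
      (hypersurfacePts f ∩ projPts U).ncard * (q ^ 2 - 1) + 1 := by
  have hcone : hypersurfacePts f ∩ projPts U = {P | P.rep ∈ U ∧ eval P.rep f = 0} := by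
    ext P
    rw [Set.mem_inter_iff, mem_projPts_iff, and_comm]
    rfl
  rw [hcone, ← hcard, ← Nat.card_eq_fintype_card]
  refine ncard_eq_ncard_rep_mem_mul (A := {v | v ∈ U ∧ eval v f = 0}) ⟨U.zero_mem, ?_⟩
    fun c v hv => ⟨U.smul_mem c hv.1, ?_⟩
  · simpa using eval_smul_of_isHomogeneous hf 0 0
  · rw [eval_smul_of_isHomogeneous hf, hv.2, mul_zero]

/-- The number of points of the Hermitian cone whose vertex is a projective space of dimension
`m - j - 1` and whose base is a non-singular Hermitian variety `H(2j, q²)`. -/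
def hermitianConeCard (q m j : ℕ) : ℕ :=
  ∑ i ∈ Finset.range m, q ^ (2 * i) + ∑ i ∈ Finset.range j, q ^ (2 * (m + i) + 1)

theorem hermitianConeCard_succ (q m j : ℕ) :
    hermitianConeCard q m (j + 1) = hermitianConeCard q m j + q ^ (2 * (m + j) + 1) := by
  rw [hermitianConeCard, Finset.sum_range_succ, ← add_assoc, hermitianConeCard]

theorem hermitianConeCard_three_zero (q : ℕ) :
    hermitianConeCard q 3 0 = q ^ 4 + q ^ 2 + 1 := by
  simp only [hermitianConeCard, Finset.sum_range_succ, Finset.sum_range_zero]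
  ring

theorem hermitianConeCard_three_two (q : ℕ) :
    hermitianConeCard q 3 2 = q ^ 9 + q ^ 7 + q ^ 4 + q ^ 2 + 1 := by
  rw [hermitianConeCard_succ, hermitianConeCard_succ, hermitianConeCard_three_zero]
  ring

theorem hermitianConeCard_three_three (q : ℕ) :
    hermitianConeCard q 3 3 = q ^ 11 + q ^ 9 + q ^ 7 + q ^ 4 + q ^ 2 + 1 := by
  rw [hermitianConeCard_succ, hermitianConeCard_three_two]
  ring

theorem hermitianConeCard_zero_mul {q : ℕ} (hq : 0 < q) (m : ℕ) :
    hermitianConeCard q m 0 * (q ^ 2 - 1) + 1 = q ^ (2 * m) := by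
  have hq2 : 1 ≤ q ^ 2 := Nat.one_le_pow _ _ hq
  simp only [hermitianConeCard, Finset.range_zero, Finset.sum_empty, add_zero, pow_mul]
  zify [hq2]
  rw [geom_sum_mul, sub_add_cancel]

theorem mul_hermitianConeCard_add {q : ℕ} (hq : 0 < q) (m j : ℕ) :
    q * (hermitianConeCard q m j * (q ^ 2 - 1) + 1) + q ^ (2 * (m + 1)) =
      q ^ (2 * (m + 1 + j)) + q * q ^ (2 * m) := by
  induction j with
  | zero => rw [hermitianConeCard_zero_mul hq, add_zero, add_comm]
  | succ j ih =>
    have hq2 : 1 ≤ q ^ 2 := Nat.one_le_pow _ _ hq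
    rw [hermitianConeCard_succ]
    zify [hq2] at ih ⊢
    linear_combination ih

end ProjectiveCount

section ExistsLinearSection

variable {F σ : Type*} [Field F] {f : MvPolynomial σ F} {q : ℕ} {W : Submodule F (σ → F)}

theorem exists_submodule_le_eval_eq_zero_iff [Finite F] [Finite σ] {N : ℕ} (hf : f.IsHomogeneous N)
    (hN : N ≠ 0)
    (hlines : ∀ e : Fin 2 → σ → F, ∃ s : Fin 2 → F, s ≠ 0 ∧ eval (∑ i, s i • e i) f = 0)
    (hcard : Nat.card {v // v ∈ W ∧ eval v f = 0} * Nat.card F ≤ Nat.card W) :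
    ∃ π ≤ W, ∀ v ∈ W, eval v f = 0 ↔ v ∈ π := by
  obtain ⟨π, hπ⟩ := exists_submodule_coe_eq_of_meets_lines (F := F) (A := {w : W | eval w.1 f = 0})
    ⟨0, by simpa [hN] using eval_smul_of_isHomogeneous hf 0 0⟩
    (fun c x hx => by
      rw [Set.mem_ofPred_eq] at hx
      simp [eval_smul_of_isHomogeneous hf, hx])
    (fun x y => by
      obtain ⟨s, hs, hzero⟩ := hlines ![x.1, y.1]
      refine ⟨s 0, s 1, ?_, by simpa [Fin.sum_univ_two] using hzero⟩
      by_contra! h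
      exact hs (funext (Fin.forall_fin_two.mpr h)))
    (by rwa [← Nat.card_congr (Equiv.subtypeSubtypeEquivSubtypeInter (· ∈ W) (eval · f = 0))]
          at hcard)
  refine ⟨π.map W.subtype, Submodule.map_subtype_le W π, fun v hv => ?_⟩
  have hmem : (⟨v, hv⟩ : W) ∈ (π : Set W) ↔ eval v f = 0 := by rw [hπ]; rfl
  rw [← hmem]
  simp [hv]

variable [Fintype F]

theorem natCard_eq_pow_of_card_eq_sq (hcard : Fintype.card F = q ^ 2) (V : Type*) [AddCommGroup V]
    [Module F V] [FiniteDimensional F V] : Nat.card V = q ^ (2 * finrank F V) := by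
  rw [Module.natCard_eq_pow_finrank (K := F), Nat.card_eq_fintype_card, hcard, pow_mul]

theorem mul_cube_sub_one_lt {P Z T : ℕ} (hq : 0 < q) (hP : 0 < P) (hT : P * q ^ 6 ≤ T)
    (hZ : q * Z + q ^ 2 * P = T + q * P) : T * (q ^ 3 - 1) < q ^ 4 * Z := by
  have hq3 : 1 ≤ q ^ 3 := Nat.one_le_pow _ _ hq
  have hpow : P * q ^ 5 ≤ P * q ^ 6 :=
    Nat.mul_le_mul_left P (Nat.pow_le_pow_right hq (by norm_num))
  have hpos : 0 < P * q ^ 4 := by positivity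
  zify [hq3] at hT hZ hpow hpos ⊢
  linear_combination (-(q : ℤ) ^ 3) * hZ + hT + hpow + hpos

theorem exists_isLinearSection [Fintype σ] (hq : 2 < q) (hcard : Fintype.card F = q ^ 2)
    (hf : f.IsHomogeneous (q + 1)) (hW : finrank F W + 2 ≤ Fintype.card σ)
    (hne : ∀ U : Submodule F (σ → F), finrank F U = finrank F W → ∃ v ∈ U, eval v f ≠ 0)
    (hWf : q ^ 2 * Nat.card {v // v ∈ W ∧ eval v f = 0} = Nat.card W)
    (hZ : q * Nat.card {v // eval v f = 0} + Nat.card W =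
      Nat.card (σ → F) + q * Nat.card {v // v ∈ W ∧ eval v f = 0}) :
    ∃ π, IsLinearSection q f W π := by
  have hcardW := natCard_eq_pow_of_card_eq_sq hcard W
  have hlines := exists_eval_eq_zero_of_card_zeros hq hcard hf <| by
    refine mul_cube_sub_one_lt (by omega) (Nat.pos_of_ne_zero fun h0 => ?_) ?_ (hWf ▸ hZ)
    · rw [h0, mul_zero] at hWf
      exact Nat.card_pos.ne hWf
    · calc Nat.card {v // v ∈ W ∧ eval v f = 0} * q ^ 6
          = q ^ 2 * Nat.card {v // v ∈ W ∧ eval v f = 0} * q ^ 4 := by ring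
        _ = q ^ (2 * (finrank F W + 2)) := by rw [hWf, hcardW, ← pow_add, mul_add]
        _ ≤ q ^ (2 * Fintype.card σ) :=
          Nat.pow_le_pow_right (by omega) (Nat.mul_le_mul_left 2 hW)
        _ = Nat.card (σ → F) := by
          rw [natCard_eq_pow_of_card_eq_sq hcard, Module.finrank_fintype_fun_eq_card]
  obtain ⟨π, hle, hπ⟩ := exists_submodule_le_eval_eq_zero_iff (W := W) hf q.succ_ne_zero hlines
    (by rw [Nat.card_eq_fintype_card (α := F), hcard, mul_comm, hWf])
  have hcardπ : Nat.card {v // v ∈ W ∧ eval v f = 0} = Nat.card π :=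
    Nat.card_congr (Equiv.subtypeEquivRight fun v =>
      ⟨fun hv => (hπ v hv.1).mp hv.2, fun hv => ⟨hle hv, (hπ v (hle hv)).mpr hv⟩⟩)
  refine ⟨π, hq, hcard, hf, hle, ?_, hW, hπ, hne, by rw [← hcardπ, hZ]⟩
  rw [hcardπ, hcardW, natCard_eq_pow_of_card_eq_sq hcard, ← pow_add, ← mul_one_add] at hWf
  have hpow := Nat.pow_right_injective (by omega) hWf
  omega

end ExistsLinearSection

section ProjectiveSection

variable {F : Type} [Field F] [Fintype F] {q n m : ℕ} {f : MvPolynomial (Fin n) F}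
  {W : Submodule F (Fin n → F)}

theorem card_zeros_eq (hcard : Fintype.card F = q ^ 2) (hf : f.IsHomogeneous (q + 1)) :
    Nat.card {v // eval v f = 0} = (hypersurfacePts f).ncard * (q ^ 2 - 1) + 1 := by
  have htop : projPts (⊤ : Submodule F (Fin n → F)) = Set.univ :=
    Set.eq_univ_of_forall fun P => le_top (a := P.submodule)
  simpa only [Submodule.mem_top, true_and, htop, Set.inter_univ] using
    card_zeros_mem_eq hcard hf ⊤

theorem exists_isLinearSection_of_ncard_eq {s : ℕ} (hq : 2 < q) (hcard : Fintype.card F = q ^ 2)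
    (hf : f.IsHomogeneous (q + 1)) (hn : n = m + 1 + s) (hs : 2 ≤ s) (hW : finrank F W = m + 1)
    (hsub : ¬ ∃ U : Submodule F (Fin n → F), finrank F U = m + 1 ∧ projPts U ⊆ hypersurfacePts f)
    (hS : (hypersurfacePts f).ncard = hermitianConeCard q m s)
    (hWS : (hypersurfacePts f ∩ projPts W).ncard = hermitianConeCard q m 0) :
    ∃ π, IsLinearSection q f W π := by
  have hq0 : 0 < q := by omega
  have hcardW := natCard_eq_pow_of_card_eq_sq hcard W
  rw [hW] at hcardW
  have hP : Nat.card {v // v ∈ W ∧ eval v f = 0} = q ^ (2 * m) := by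
    rw [card_zeros_mem_eq hcard hf, hWS, hermitianConeCard_zero_mul hq0]
  refine exists_isLinearSection hq hcard hf (by rw [hW, Fintype.card_fin]; omega)
    (fun U hU => exists_eval_ne_zero_of_not_projPts_subset fun hUS => hsub ⟨U, hU.trans hW, hUS⟩)
    (by rw [hP, hcardW]; ring) ?_
  rw [card_zeros_eq hcard hf, hS, hP, hcardW, mul_hermitianConeCard_add hq0,
    natCard_eq_pow_of_card_eq_sq hcard (Fin n → F), finrank_fin_fun, hn]

theorem IsLinearSection.ncard_inter_projPts {π U : Submodule F (Fin n → F)} {j : ℕ}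
    (h : IsLinearSection q f W π) (hWU : W ≤ U) (hW : finrank F W = m + 1)
    (hU : finrank F U = m + 1 + j) :
    (hypersurfacePts f ∩ projPts U).ncard = hermitianConeCard q m j := by
  have hq := h.two_lt
  have hπ : finrank F π = m := Nat.succ_injective (h.finrank_add_one.trans hW)
  have hcount := h.card_zeros_inf hWU
  rw [card_zeros_mem_eq h.card_eq h.homogeneous, natCard_eq_pow_of_card_eq_sq h.card_eq,
    natCard_eq_pow_of_card_eq_sq h.card_eq, natCard_eq_pow_of_card_eq_sq h.card_eq, hW, hU, hπ,
    ← mul_hermitianConeCard_add (by omega)] at hcount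
  exact Nat.eq_of_mul_eq_mul_right (Nat.sub_pos_of_lt (Nat.one_lt_pow two_ne_zero (by omega)))
    (Nat.add_right_cancel
      (Nat.eq_of_mul_eq_mul_left (by omega) (Nat.add_right_cancel hcount)))

end ProjectiveSection

theorem stmt_12_general {q n m s : ℕ} (hq : 2 < q) {F : Type} [Field F] [Fintype F]
    (hcard : Fintype.card F = q ^ 2) {f : MvPolynomial (Fin n) F} (hf : f.IsHomogeneous (q + 1))
    (hn : n = m + 1 + s) (hs : 2 ≤ s)
    (hsub : ¬ ∃ U : Submodule F (Fin n → F), finrank F U = m + 1 ∧ projPts U ⊆ hypersurfacePts f)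
    (hS : (hypersurfacePts f).ncard = hermitianConeCard q m s)
    {W : Submodule F (Fin n → F)} (hW : finrank F W = m + 1)
    (hWS : (hypersurfacePts f ∩ projPts W).ncard = hermitianConeCard q m 0)
    {U : Submodule F (Fin n → F)} {j k : ℕ} (hjk : j + k = m) (hU : finrank F U = m + 1 + j)
    (hWU : W ≤ U) :
    IsHermitianConeOn q U k (hypersurfacePts f ∩ projPts U) ∧
      (hypersurfacePts f ∩ projPts U).ncard = hermitianConeCard q m j := by
  obtain ⟨π, h⟩ := exists_isLinearSection_of_ncard_eq hq hcard hf hn hs hW hsub hS hWS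
  have hπ := h.finrank_add_one
  exact ⟨h.isHermitianConeOn hWU (by omega), h.ncard_inter_projPts hWU hW hU⟩

/-- Under the hypotheses of the main theorem, every `5`-space `Σ₅` through the special
solid `Σ₃` meets `S` in a Hermitian cone with vertex a point and base a non-singular
Hermitian variety `H(4,q²)`; in particular `|S ∩ Σ₅| = q⁹ + q⁷ + q⁴ + q² + 1`. -/
theorem stmt_12 (q : ℕ) (hq : ∃ p k : ℕ, p.Prime ∧ 0 < k ∧ q = p ^ k) (hq2 : 2 < q)
    (F : Type) [Field F] [Fintype F] (hcardF : Fintype.card F = q ^ 2)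
    (f : MvPolynomial (Fin 7) F) (hf0 : f ≠ 0) (hfdeg : f.IsHomogeneous (q + 1))
    (S : Set (Projectivization F (Fin 7 → F))) (hS : S = hypersurfacePts f)
    (hnosolid : ¬ ∃ W : Submodule F (Fin 7 → F), Module.finrank F W = 4 ∧ projPts W ⊆ S)
    (hcardS : S.ncard = q ^ 11 + q ^ 9 + q ^ 7 + q ^ 4 + q ^ 2 + 1)
    (W₃ : Submodule F (Fin 7 → F)) (hW₃ : Module.finrank F W₃ = 4)
    (hint : (S ∩ projPts W₃).ncard = q ^ 4 + q ^ 2 + 1) :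
    ∀ W₅ : Submodule F (Fin 7 → F), Module.finrank F W₅ = 6 → W₃ ≤ W₅ →
      IsHermitianConeOn q W₅ 1 (S ∩ projPts W₅) ∧
      (S ∩ projPts W₅).ncard = q ^ 9 + q ^ 7 + q ^ 4 + q ^ 2 + 1 := by
  subst hS
  rw [← hermitianConeCard_three_zero] at hint
  rw [← hermitianConeCard_three_three] at hcardS
  intro W₅ hW₅ hle
  rw [← hermitianConeCard_three_two]
  exact stmt_12_general hq2 hcardF hfdeg rfl (by norm_num) hnosolid hcardS hW₃ hint rfl hW₅ hle
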